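/- arXiv:1909.00374 — 7 statements merged into one kernel-verified Lean document; each statement's English description precedes it below -/
import Mathlib

section
/- Let (X, ℓ₁) and (Y, ℓ₂) be metric spaces, let I : X → [0,∞] be a function all of whose sub-level sets {x : I(x) ≤ c}, c ∈ [0,∞), are totally bounded, and let F : X → Y be a map that is uniformly continuous on every sub-level set of I. Define J̃(y) := inf{I(x) : x ∈ X, F(x) = y} and let cl J̃ be its lower semicontinuous regularization. Then every sub-level set {y : cl J̃(y) ≤ c}, c ∈ [0,∞), is totally bounded in (Y, ℓ₂). -/
/-!
If `cl J̃ y ≤ c`, then every neighbourhood of `y` contains some `z` with `J̃ z < c + 1`, hence a point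
`F x` with `I x ≤ c + 1`. So the sub-level set of `cl J̃` at `c` lies in the closure of
`F '' {I ≤ c + 1}`. That image is totally bounded because `F` is uniformly continuous on the totally
bounded set `{I ≤ c + 1}`, and closures and subsets of totally bounded sets are totally bounded.
-/

open Set Filter Topology Metric

noncomputable section

/-- The lower semicontinuous regularization of `J`. -/
def lscReg {Y : Type*} [TopologicalSpace Y] (J : Y → ENNReal) : Y → ENNReal :=
  fun y => ⨆ (U : Set Y) (_ : IsOpen U) (_ : y ∈ U), ⨅ z ∈ U, J z

/-- `tildeJ F I y = inf { I x : F x = y }`. -/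
def tildeJ {X Y : Type*} (F : X → Y) (I : X → ENNReal) : Y → ENNReal :=
  fun y => ⨅ x ∈ F ⁻¹' {y}, I x

theorem TotallyBounded.image_of_uniformContinuousOn {X Y : Type*} [UniformSpace X] [UniformSpace Y]
    {s : Set X} {f : X → Y} (hs : TotallyBounded s) (hf : UniformContinuousOn f s) :
    TotallyBounded (f '' s) := by
  have h : TotallyBounded (univ : Set s) :=
    (totallyBounded_image_iff (isUniformInducing_val s)).1 (by simpa using hs)
  have h2 := h.image (uniformContinuousOn_iff_restrict.1 hf)
  rwa [image_univ, range_domRestrict] at h2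

/-- The strict gap `a < b` is needed: the infima of `I` over neighbourhoods of `y` and over fibres of
`F` need not be attained. -/
theorem sublevel_lscReg_subset_closure {X Y : Type*} [TopologicalSpace Y]
    (I : X → ENNReal) (F : X → Y) {a b : ENNReal} (hab : a < b) :
    {y | lscReg (tildeJ F I) y ≤ a} ⊆ closure (F '' {x | I x ≤ b}) := by
  intro y hy
  rw [_root_.mem_closure_iff]
  intro U hU hyU
  have hle : (⨅ z ∈ U, tildeJ F I z) ≤ lscReg (tildeJ F I) y := by
    unfold lscReg
    refine le_iSup_of_le U ?_
    rw [iSup_pos hU, iSup_pos hyU]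
  have h : (⨅ z ∈ U, tildeJ F I z) < b := (hle.trans hy).trans_lt hab
  simp only [tildeJ, iInf_lt_iff] at h
  obtain ⟨z, hz, x, hx, hxb⟩ := h
  obtain rfl : F x = z := hx
  exact ⟨F x, hz, x, hxb.le, rfl⟩

/-- If all sub-level sets of `I` are totally bounded and `F` is uniformly continuous on each
sub-level set of `I`, then all sub-level sets of the lower semicontinuous regularization of
`tildeJ F I` are totally bounded. -/
theorem totallyBounded_sublevel_lscReg
    {X Y : Type*} [MetricSpace X] [MetricSpace Y]
    (I : X → ENNReal) (hI : ∀ c : NNReal, TotallyBounded {x | I x ≤ (c : ENNReal)})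
    (F : X → Y) (hF : ∀ c : NNReal, UniformContinuousOn F {x | I x ≤ (c : ENNReal)}) :
    ∀ c : NNReal, TotallyBounded {y | lscReg (tildeJ F I) y ≤ (c : ENNReal)} := by
  intro c
  have h := (hI (c + 1)).image_of_uniformContinuousOn (hF (c + 1))
  refine h.closure.subset (sublevel_lscReg_subset_closure I F ?_)
  exact_mod_cast lt_add_one c
end
end

section
/- Let d ≥ 1, let h : [0,1] → ℝ^d be a càdlàg function of bounded variation with pointwise total variation V := sup over partitions 0 = s₀ < s₁ < ⋯ < s_k = 1 of Σ_i |h(s_i) − h(s_{i−1})| (Euclidean norms), and let g : [0,1] → ℝ^d be any càdlàg function. Let r' := ρ₂'(g, h) be the Hausdorff distance between the modified completed graphs Γ'g and Γ'h. Then ∫₀¹ |g(s) − h(s)| ds ≤ 2·d·(|h(0)| + V + 1)·r' + π·d·(r')². -/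
/-!
The bound follows from integrating local oscillations of `h`, with the better constant
`2 (‖h 0‖ + V + 1)` and no quadratic term.

Fix `r` larger than the Hausdorff distance. For `s ∈ [0,1]` some point `(t, y)` of the modified
graph of `h` lies within `r` of `(s, g s)`, so `‖g s - y‖ < r` and `|t - s| < r`. Let `W` be the
cumulative variation of `h`, extended by a jump of size `‖h 0‖` at time `0` which accounts for the
extra segment `[0, h 0]`. All values of the modified graph at times in `(s - r, s + r)` are within
`W (s + r) - W (s - r)` of `h s`, hence
`‖g s - h s‖ ≤ r + (W (s + r) - W (s - r))`.
As `W` is monotone with values in `[0, ‖h 0‖ + V]`, a change of variables shows that the integral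
over `[0,1]` of the increment is at most `2 r (‖h 0‖ + V)`. Finally `r` decreases to the
Hausdorff distance, which is meaningful because càdlàg functions are bounded.
-/

open Set Filter Topology Metric MeasureTheory

noncomputable section

/-- `h` is càdlàg on `[0,1]`: right-continuous on `[0,1)` and with left limits on `(0,1]`. -/
def Cadlag01 {E : Type*} [TopologicalSpace E] (h : ℝ → E) : Prop :=
  (∀ t ∈ Ico (0:ℝ) 1, Tendsto h (nhdsWithin t (Ioi t)) (nhds (h t))) ∧
  ∀ t ∈ Ioc (0:ℝ) 1, ∃ L, Tendsto h (nhdsWithin t (Iio t)) (nhds L)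

/-- The left limit of `h` at `t`, with the convention `h(0-) := h(0)`. -/
def leftLimAt {E : Type*} [TopologicalSpace E] (h : ℝ → E) (t : ℝ) : E :=
  if t = 0 then h 0 else Function.leftLim h t

/-- A point `(t, x)` of `[0,1] × ℝ^d`, regarded as an element of the Euclidean space
`ℝ^{1+d}` (the `L²`-product). -/
def gPoint {d : ℕ} (t : ℝ) (x : EuclideanSpace ℝ (Fin d)) :
    WithLp 2 (ℝ × EuclideanSpace ℝ (Fin d)) :=
  (WithLp.equiv 2 (ℝ × EuclideanSpace ℝ (Fin d))).symm (t, x)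

/-- The completed graph of `h`. -/
def cGraph {d : ℕ} (h : ℝ → EuclideanSpace ℝ (Fin d)) :
    Set (WithLp 2 (ℝ × EuclideanSpace ℝ (Fin d))) :=
  {p | ∃ t ∈ Icc (0:ℝ) 1, ∃ x ∈ segment ℝ (leftLimAt h t) (h t), p = gPoint t x}

/-- The modified completed graph `Γ'h := Γh ∪ ({0} × [0, h(0)])`. -/
def cGraph' {d : ℕ} (h : ℝ → EuclideanSpace ℝ (Fin d)) :
    Set (WithLp 2 (ℝ × EuclideanSpace ℝ (Fin d))) :=
  cGraph h ∪ {p | ∃ x ∈ segment ℝ (0 : EuclideanSpace ℝ (Fin d)) (h 0), p = gPoint 0 x}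

/-! ### Averaged increments of monotone functions -/

/-- A monotone function with values in `[0, M]` has averaged `2r`-increments at most `2rM`. -/
lemma integral_increment_le {W : ℝ → ℝ} (hW : Monotone W) {M r : ℝ} (hr : 0 ≤ r)
    (h0 : ∀ x, 0 ≤ W x) (hM : ∀ x, W x ≤ M) :
    (∫ s in (0:ℝ)..1, (W (s + r) - W (s - r))) ≤ 2 * r * M := by
  have hi : ∀ a b, IntervalIntegrable W volume a b := fun a b => hW.intervalIntegrable
  have hp : Monotone fun s => W (s + r) := fun a b hab => hW (by linarith)
  have hm : Monotone fun s => W (s - r) := fun a b hab => hW (by linarith)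
  rw [intervalIntegral.integral_sub hp.intervalIntegrable hm.intervalIntegrable,
    intervalIntegral.integral_comp_add_right, intervalIntegral.integral_comp_sub_right]
  have e1 := intervalIntegral.integral_add_adjacent_intervals (hi (0 - r) (0 + r)) (hi (0 + r) (1 + r))
  have e2 := intervalIntegral.integral_add_adjacent_intervals (hi (0 - r) (1 - r)) (hi (1 - r) (1 + r))
  have l1 : 0 ≤ ∫ x in (0 - r)..(0 + r), W x :=
    intervalIntegral.integral_nonneg (by linarith) fun x _ => h0 x
  have l2 : (∫ x in (1 - r)..(1 + r), W x) ≤ ∫ _x in (1 - r)..(1 + r), M :=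
    intervalIntegral.integral_mono_on (by linarith) (hi _ _) (by simp) fun x _ => hM x
  rw [intervalIntegral.integral_const, smul_eq_mul] at l2
  nlinarith

/-! ### Cumulative variation -/

section cumulative

variable {E : Type*} [NormedAddCommGroup E]

/-- The cumulative variation of `h` on `[0,1]`, extended to all of `ℝ`, with an initial jump of
size `‖h 0‖` at time `0` (as if `h` vanished at negative times). -/
def cumVar (h : ℝ → E) (x : ℝ) : ℝ :=
  if x < 0 then 0 else ‖h 0‖ + (eVariationOn h (Icc (0:ℝ) 1 ∩ Iic x)).toReal

lemma cumVar_nonneg (h : ℝ → E) (x : ℝ) : 0 ≤ cumVar h x := by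
  unfold cumVar; split_ifs <;> positivity

variable {h : ℝ → E}

lemma cumVar_part_ne_top (hBV : eVariationOn h (Icc (0:ℝ) 1) ≠ ⊤)
    (x : ℝ) : eVariationOn h (Icc (0:ℝ) 1 ∩ Iic x) ≠ ⊤ :=
  ne_top_of_le_ne_top hBV (eVariationOn.mono h inter_subset_left)

lemma cumVar_le (hBV : eVariationOn h (Icc (0:ℝ) 1) ≠ ⊤)
    (x : ℝ) : cumVar h x ≤ ‖h 0‖ + (eVariationOn h (Icc (0:ℝ) 1)).toReal := by
  unfold cumVar
  split_ifs
  · positivity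
  · gcongr
    exact eVariationOn.mono h inter_subset_left

lemma cumVar_mono (hBV : eVariationOn h (Icc (0:ℝ) 1) ≠ ⊤) :
    Monotone (cumVar h) := by
  intro x y hxy
  by_cases hx : x < 0
  · rw [cumVar, if_pos hx]; exact cumVar_nonneg h y
  · rw [cumVar, if_neg hx, cumVar, if_neg (by linarith)]
    gcongr
    · exact cumVar_part_ne_top hBV y
    · exact eVariationOn.mono h (inter_subset_inter_right _ (Iic_subset_Iic.2 hxy))

lemma dist_le_cumVar_sub (hBV : eVariationOn h (Icc (0:ℝ) 1) ≠ ⊤)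
    {x y : ℝ} (hx : 0 ≤ x) (hxy : x ≤ y) (hy : y ≤ 1) :
    dist (h x) (h y) ≤ cumVar h y - cumVar h x := by
  have h1 : eVariationOn h (Icc (0:ℝ) 1 ∩ Iic x) + eVariationOn h (Icc x y) ≤
      eVariationOn h (Icc (0:ℝ) 1 ∩ Iic y) :=
    (eVariationOn.add_le_union h fun a ha b hb => ha.2.trans hb.1).trans
      (eVariationOn.mono h (by
        rintro z (hz | hz)
        · exact ⟨hz.1, hz.2.trans hxy⟩
        · exact ⟨⟨hx.trans hz.1, hz.2.trans hy⟩, hz.2⟩))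
  have h2 : edist (h x) (h y) ≤ eVariationOn h (Icc x y) :=
    eVariationOn.edist_le h (left_mem_Icc.2 hxy) (right_mem_Icc.2 hxy)
  have h3 := (add_le_add_right h2 (eVariationOn h (Icc (0:ℝ) 1 ∩ Iic x))).trans h1
  have h4 := ENNReal.toReal_mono (cumVar_part_ne_top hBV y) h3
  rw [ENNReal.toReal_add (cumVar_part_ne_top hBV x) (edist_ne_top _ _), ← dist_edist] at h4
  rw [cumVar, if_neg (by linarith), cumVar, if_neg (by linarith)]
  linarith

lemma dist_le_cumVar_window (hBV : eVariationOn h (Icc (0:ℝ) 1) ≠ ⊤)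
    {s u r : ℝ} (hs : s ∈ Icc (0:ℝ) 1) (hu : u ∈ Icc (0:ℝ) 1)
    (hus : |u - s| < r) : dist (h u) (h s) ≤ cumVar h (s + r) - cumVar h (s - r) := by
  have := abs_lt.1 hus
  have hmono := cumVar_mono hBV
  rcases le_total u s with hle | hle
  · have := dist_le_cumVar_sub hBV hu.1 hle hs.2
    have := hmono (show s ≤ s + r by linarith)
    have := hmono (show s - r ≤ u by linarith)
    linarith
  · have := dist_le_cumVar_sub hBV hs.1 hle hu.2
    have := hmono (show u ≤ s + r by linarith)
    have := hmono (show s - r ≤ s by linarith)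
    rw [dist_comm]
    linarith

end cumulative

/-! ### Left limits and boundedness of càdlàg functions -/

section leftLimits

variable {E : Type*} [NormedAddCommGroup E]

/-- Any closed condition that holds for `h` on a left neighbourhood of `t` within `[0,1]`, and at
`t` itself, holds for the left limit. -/
lemma leftLimAt_mem {h : ℝ → E} (hc : Cadlag01 h) {t : ℝ} (ht : t ∈ Icc (0:ℝ) 1) {S : Set E}
    (hS : IsClosed S) (hev : ∀ᶠ u in 𝓝 t, u ∈ Icc (0:ℝ) 1 → h u ∈ S) : leftLimAt h t ∈ S := by
  unfold leftLimAt
  split_ifs with h0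
  · subst h0; exact hev.self_of_nhds ht
  · have htpos : 0 < t := lt_of_le_of_ne ht.1 (Ne.symm h0)
    obtain ⟨L, hL⟩ := hc.2 t ⟨htpos, ht.2⟩
    rw [leftLim_eq_of_tendsto hL]
    refine hS.mem_of_tendsto hL ?_
    filter_upwards [nhdsWithin_le_nhds hev, nhdsWithin_le_nhds (lt_mem_nhds htpos),
      self_mem_nhdsWithin] with u hu hu0 hut
    exact hu ⟨hu0.le, (le_of_lt hut).trans ht.2⟩

lemma Cadlag01.exists_bound {h : ℝ → E} (hc : Cadlag01 h) :
    ∃ C, ∀ t ∈ Icc (0:ℝ) 1, ‖h t‖ ≤ C := by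
  -- Compactness of `[0,1]` reduces the claim to local boundedness.
  refine isCompact_Icc.induction_on (p := fun s => ∃ C, ∀ t ∈ s, ‖h t‖ ≤ C) ⟨0, by simp⟩
    (fun s t hst ⟨C, hC⟩ => ⟨C, fun x hx => hC x (hst hx)⟩)
    (fun s t ⟨C, hC⟩ ⟨D, hD⟩ => ⟨max C D, ?_⟩) ?_
  · rintro x (hx | hx)
    · exact (hC x hx).trans (le_max_left _ _)
    · exact (hD x hx).trans (le_max_right _ _)
  · intro t ht
    have hl : ∃ C, ∀ᶠ u in 𝓝[<] t, u ∈ Icc (0:ℝ) 1 → ‖h u‖ ≤ C := by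
      rcases ht.1.eq_or_lt with h0 | h0
      · refine ⟨0, ?_⟩
        filter_upwards [self_mem_nhdsWithin] with u hu hu'
        exact absurd hu'.1 (by simpa [← h0] using hu)
      · obtain ⟨L, hL⟩ := hc.2 t ⟨h0, ht.2⟩
        refine ⟨‖L‖ + 1, ?_⟩
        filter_upwards [hL.norm.eventually (gt_mem_nhds (lt_add_one ‖L‖))] with u hu _
        exact le_of_lt hu
    have hr : ∃ C, ∀ᶠ u in 𝓝[>] t, u ∈ Icc (0:ℝ) 1 → ‖h u‖ ≤ C := by
      rcases ht.2.eq_or_lt with h0 | h0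
      · refine ⟨0, ?_⟩
        filter_upwards [self_mem_nhdsWithin] with u hu hu'
        exact absurd hu'.2 (by simpa [h0] using hu)
      · refine ⟨‖h t‖ + 1, ?_⟩
        filter_upwards [(hc.1 t ⟨ht.1, h0⟩).norm.eventually
          (gt_mem_nhds (lt_add_one ‖h t‖))] with u hu _
        exact le_of_lt hu
    obtain ⟨A, hA⟩ := hl
    obtain ⟨B, hB⟩ := hr
    refine ⟨{u | u ∈ Icc (0:ℝ) 1 → ‖h u‖ ≤ max ‖h t‖ (max A B)} ∩ Icc 0 1,
      inter_mem (mem_nhdsWithin_of_mem_nhds ?_) self_mem_nhdsWithin,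
      ⟨_, fun u hu => hu.1 hu.2⟩⟩
    rw [eventually_nhdsWithin_iff] at hA hB
    filter_upwards [hA, hB] with u hu1 hu2 hu
    rcases lt_trichotomy u t with hlt | rfl | hgt
    · exact (hu1 hlt hu).trans ((le_max_left _ _).trans (le_max_right _ _))
    · exact le_max_left _ _
    · exact (hu2 hgt hu).trans ((le_max_right _ _).trans (le_max_right _ _))

end leftLimits

/-! ### Modified completed graphs -/

section graphs

variable {d : ℕ}

lemma norm_gPoint_le (t : ℝ) (x : EuclideanSpace ℝ (Fin d)) : ‖gPoint t x‖ ≤ |t| + ‖x‖ := by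
  have h1 : ‖gPoint t x‖ ^ 2 = |t| ^ 2 + ‖x‖ ^ 2 := WithLp.prod_norm_sq_eq_of_L2 _
  refine le_of_sq_le_sq ?_ (by positivity)
  nlinarith [mul_nonneg (abs_nonneg t) (norm_nonneg x)]

lemma dist_gPoint_sq (s t : ℝ) (x y : EuclideanSpace ℝ (Fin d)) :
    dist (gPoint s x) (gPoint t y) ^ 2 = |s - t| ^ 2 + ‖x - y‖ ^ 2 := by
  rw [dist_eq_norm]
  exact WithLp.prod_norm_sq_eq_of_L2 _

lemma graph_mem {g : ℝ → EuclideanSpace ℝ (Fin d)} {s : ℝ} (hs : s ∈ Icc (0:ℝ) 1) :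
    gPoint s (g s) ∈ cGraph' g :=
  Or.inl ⟨s, hs, g s, right_mem_segment _ _ _, rfl⟩

lemma cGraph'_isBounded {g : ℝ → EuclideanSpace ℝ (Fin d)} (hg : Cadlag01 g) :
    Bornology.IsBounded (cGraph' g) := by
  obtain ⟨C, hC⟩ := hg.exists_bound
  have hC0 : 0 ≤ C := (norm_nonneg _).trans (hC 0 (by simp))
  have hin : ∀ t ∈ Icc (0:ℝ) 1, g t ∈ closedBall (0 : EuclideanSpace ℝ (Fin d)) C :=
    fun t ht => mem_closedBall_zero_iff.2 (hC t ht)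
  refine isBounded_iff_forall_norm_le.2 ⟨1 + C, ?_⟩
  rintro p (⟨t, ht, x, hx, rfl⟩ | ⟨x, hx, rfl⟩)
  · have hl := leftLimAt_mem hg ht isClosed_closedBall (Eventually.of_forall hin)
    have := mem_closedBall_zero_iff.1 ((convex_closedBall _ _).segment_subset hl (hin t ht) hx)
    have h1 := norm_gPoint_le t x
    rw [abs_of_nonneg ht.1] at h1
    linarith [ht.2]
  · have := mem_closedBall_zero_iff.1 ((convex_closedBall _ _).segment_subset
      (mem_closedBall_self hC0) (hin 0 (by simp)) hx)
    have h1 := norm_gPoint_le 0 x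
    rw [abs_zero] at h1
    linarith

/-- Every point of the modified graph of `h` at a time within `r` of `s` is close to `h s`. The
strict inequality is what makes left limits at `t` visible in the open window. -/
lemma dist_le_of_mem_cGraph' {h : ℝ → EuclideanSpace ℝ (Fin d)} (hc : Cadlag01 h)
    (hBV : eVariationOn h (Icc (0:ℝ) 1) ≠ ⊤) {s r : ℝ} (hs : s ∈ Icc (0:ℝ) 1)
    {p : WithLp 2 (ℝ × EuclideanSpace ℝ (Fin d))} (hp : p ∈ cGraph' h) :
    ∃ t x, p = gPoint t x ∧
      (|t - s| < r → dist x (h s) ≤ cumVar h (s + r) - cumVar h (s - r)) := by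
  rcases hp with ⟨t, ht, x, hx, rfl⟩ | ⟨x, hx, rfl⟩
  · refine ⟨t, x, rfl, fun hts => ?_⟩
    have hev : ∀ᶠ u in 𝓝 t, |u - s| < r :=
      (by fun_prop : Continuous fun u : ℝ => |u - s|).continuousAt.eventually (gt_mem_nhds hts)
    have hl := leftLimAt_mem hc ht (S := closedBall (h s) (cumVar h (s + r) - cumVar h (s - r)))
      isClosed_closedBall (hev.mono fun u hu hu01 => dist_le_cumVar_window hBV hs hu01 hu)
    exact (convex_closedBall _ _).segment_subset hl (dist_le_cumVar_window hBV hs ht hts) hx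
  · refine ⟨0, x, rfl, fun hts => ?_⟩
    have hsr : s - r < 0 := by have := (abs_lt.1 hts).1; linarith
    have hsr' : s ≤ s + r := by have := (abs_nonneg _).trans_lt hts; linarith
    have h1 : dist x (h 0) ≤ ‖h 0‖ := by
      have := (convex_closedBall (h 0) ‖h 0‖).segment_subset
        (x := 0) (y := h 0) (by simp) (by simp) hx
      exact this
    have h2 := dist_le_cumVar_sub hBV le_rfl hs.1 hs.2
    have h3 := cumVar_mono hBV hsr'
    have h4 : ‖h 0‖ ≤ cumVar h 0 := by
      rw [cumVar, if_neg (lt_irrefl _)]; exact le_add_of_nonneg_right ENNReal.toReal_nonneg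
    have h5 : cumVar h (s - r) = 0 := if_pos hsr
    linarith [dist_triangle x (h 0) (h s)]

lemma norm_sub_le_of_hausdorffDist_lt {h g : ℝ → EuclideanSpace ℝ (Fin d)}
    (hc : Cadlag01 h) (gc : Cadlag01 g) (hBV : eVariationOn h (Icc (0:ℝ) 1) ≠ ⊤) {r : ℝ}
    (hr : hausdorffDist (cGraph' g) (cGraph' h) < r) {s : ℝ} (hs : s ∈ Icc (0:ℝ) 1) :
    ‖g s - h s‖ ≤ r + (cumVar h (s + r) - cumVar h (s - r)) := by
  have hfin : hausdorffEDist (cGraph' g) (cGraph' h) ≠ ⊤ :=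
    hausdorffEDist_ne_top_of_nonempty_of_bounded ⟨_, graph_mem hs⟩ ⟨_, graph_mem hs⟩
      (cGraph'_isBounded gc) (cGraph'_isBounded hc)
  obtain ⟨p, hp, hdist⟩ := exists_dist_lt_of_hausdorffDist_lt (graph_mem hs) hr hfin
  obtain ⟨t, x, rfl, hx⟩ := dist_le_of_mem_cGraph' (r := r) hc hBV hs hp
  have hsq := dist_gPoint_sq s t (g s) x
  have h1 : |s - t| ≤ dist (gPoint s (g s)) (gPoint t x) :=
    le_of_sq_le_sq (by nlinarith [sq_nonneg ‖g s - x‖]) dist_nonneg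
  have h2 : ‖g s - x‖ ≤ dist (gPoint s (g s)) (gPoint t x) :=
    le_of_sq_le_sq (by nlinarith [sq_nonneg |s - t|]) dist_nonneg
  have h3 := hx (by rw [abs_sub_comm]; linarith)
  rw [dist_eq_norm] at h3
  linarith [norm_sub_le_norm_sub_add_norm_sub (g s) x (h s)]

end graphs

/-! ### The integral estimate -/

/-- The `L¹`-distance between two càdlàg functions on `[0,1]` is controlled by the Hausdorff
distance `r' = ρ₂'(g,h)` between their modified completed graphs:
`∫₀¹ |g - h| ≤ 2 d (|h(0)| + V + 1) r' + π d r'²`. -/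
theorem integral_dist_le_of_hausdorffDist_modified_graphs
    {d : ℕ} (hd : 1 ≤ d)
    (h g : ℝ → EuclideanSpace ℝ (Fin d))
    (hcadlag : Cadlag01 h) (gcadlag : Cadlag01 g)
    (hBV : eVariationOn h (Icc (0:ℝ) 1) ≠ ⊤) :
    (∫ s in Icc (0:ℝ) 1, ‖g s - h s‖) ≤
      2 * d * (‖h 0‖ + (eVariationOn h (Icc (0:ℝ) 1)).toReal + 1) *
          Metric.hausdorffDist (cGraph' g) (cGraph' h) +
        Real.pi * d * Metric.hausdorffDist (cGraph' g) (cGraph' h) ^ 2 := by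
  set ρ := Metric.hausdorffDist (cGraph' g) (cGraph' h) with hρ
  set V := (eVariationOn h (Icc (0:ℝ) 1)).toReal with hV
  have hρ0 : 0 ≤ ρ := hausdorffDist_nonneg
  have hV0 : 0 ≤ V := ENNReal.toReal_nonneg
  have hmono := cumVar_mono hBV
  have key : ∀ r, ρ < r → (∫ s in Icc (0:ℝ) 1, ‖g s - h s‖) ≤ 2 * (‖h 0‖ + V + 1) * r := by
    intro r hr
    have hr0 : 0 ≤ r := hρ0.trans hr.le
    have hp : Monotone fun s => cumVar h (s + r) := fun a b hab => hmono (by linarith)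
    have hm : Monotone fun s => cumVar h (s - r) := fun a b hab => hmono (by linarith)
    have hD : IntervalIntegrable (fun s => cumVar h (s + r) - cumVar h (s - r)) volume 0 1 :=
      hp.intervalIntegrable.sub hm.intervalIntegrable
    have hI : IntervalIntegrable (fun s => r + (cumVar h (s + r) - cumVar h (s - r)))
        volume 0 1 := intervalIntegrable_const.add hD
    -- Comparison of integrals of nonnegative functions needs no measurability of `g`.
    have h1 : (∫ s in Icc (0:ℝ) 1, ‖g s - h s‖) ≤
        ∫ s in Icc (0:ℝ) 1, (r + (cumVar h (s + r) - cumVar h (s - r))) := by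
      refine integral_mono_of_nonneg (Eventually.of_forall fun s => norm_nonneg _)
        ((intervalIntegrable_iff_integrableOn_Icc_of_le zero_le_one).1 hI) ?_
      filter_upwards [ae_restrict_mem measurableSet_Icc] with s hs
      exact norm_sub_le_of_hausdorffDist_lt hcadlag gcadlag hBV hr hs
    rw [integral_Icc_eq_integral_Ioc (f := fun s => r + _),
      ← intervalIntegral.integral_of_le zero_le_one,
      intervalIntegral.integral_add intervalIntegrable_const hD,
      intervalIntegral.integral_const, smul_eq_mul] at h1
    have h2 := integral_increment_le hmono hr0 (cumVar_nonneg h) (cumVar_le hBV)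
    rw [← hV] at h2
    linarith
  have hlim : (∫ s in Icc (0:ℝ) 1, ‖g s - h s‖) ≤ 2 * (‖h 0‖ + V + 1) * ρ := by
    have ht : Tendsto (fun r => 2 * (‖h 0‖ + V + 1) * r) (𝓝[>] ρ)
        (𝓝 (2 * (‖h 0‖ + V + 1) * ρ)) :=
      (by fun_prop : Continuous fun r => 2 * (‖h 0‖ + V + 1) * r).continuousWithinAt
    exact ge_of_tendsto ht (by filter_upwards [self_mem_nhdsWithin] with r hr using key r hr)
  have hd1 : (1:ℝ) ≤ d := by exact_mod_cast hd
  have hA : 0 ≤ 2 * (‖h 0‖ + V + 1) * ρ := by positivity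
  have hB : 0 ≤ Real.pi * d * ρ ^ 2 := by positivity
  nlinarith [mul_le_mul_of_nonneg_right hd1 hA]
end
end

section
/- Assume the Cramér moment assumption 0 ∈ interior(D_L). Then I_D is a tight rate function on the metric space (BV([0,1];ℝ^d), ρ_*): for every c ∈ [0,∞), the sub-level set {h ∈ BV[0,1] : I_D(h) ≤ c} is a compact subset of (BV[0,1], ρ_*). -/
/-!
The Cramér condition puts `± r eᵢ` in the domain of `L` for some `r > 0`, so `I` grows at least
linearly: `‖v‖ ≤ A I(v) + B` (`exists_norm_le_rateI`). Summed over a partition, this bounds the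
total variation of every `h` with `I_D(h) ≤ c` (value at `0` replaced by `0`) by the common constant
`M = A c + B` (`eVariationOn_zeroAt0_le`).

Compactness is checked on ultrafilters, which replaces Helly's selection theorem. Along an
ultrafilter `F` containing the sub-level set, the functions converge pointwise, by compactness of
balls, to some `g` of variation at most `M`; the candidate limit in `BV[0,1]` is the right-limit
`h` of `g`. Two facts remain.

* `I_D(h) ≤ c`: as `I`, a supremum of continuous functions, is lower semicontinuous, so are
  partition sums in their nodes and values (`partSum_le_of_tendsto`). Hence the bound `c` passes from
  the sub-level set to `g`, and from `g` to `h` by moving the interior nodes slightly to the right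
  (`ID_rightLim_le`).
* `F` converges to `h` in `ρ_*`: dominated convergence is not available along ultrafilters, but on the
  grid with `N` cells a function of variation at most `M` is within `M / N`, in `L¹`, of its values
  at the nodes, so `ρ_*(x, h) ≤ 2 M / N + 2 η` as soon as `x` is `η`-close to `g` at the finitely
  many nodes (`rhoStar_le`).
-/

open Set Filter Topology Metric MeasureTheory
open scoped RealInnerProductSpace ENNReal

noncomputable section

/-- The Laplace transform `L(u) = E[exp(u·X₁)]` (as a Lebesgue integral in `[0,∞]`). -/
def lap {d : ℕ} {Ω : Type*} [MeasurableSpace Ω] (P : Measure Ω)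
    (X1 : Ω → EuclideanSpace ℝ (Fin d)) (u : EuclideanSpace ℝ (Fin d)) : ℝ≥0∞ :=
  ∫⁻ ω, ENNReal.ofReal (Real.exp ⟪u, X1 ω⟫) ∂P

/-- The effective domain `D_L` of the Laplace transform. -/
def lapDom {d : ℕ} {Ω : Type*} [MeasurableSpace Ω] (P : Measure Ω)
    (X1 : Ω → EuclideanSpace ℝ (Fin d)) : Set (EuclideanSpace ℝ (Fin d)) :=
  {u | lap P X1 u ≠ ⊤}

/-- The cumulant generating function `K = log L` (junk value where `L = ∞`). -/
def cgfK {d : ℕ} {Ω : Type*} [MeasurableSpace Ω] (P : Measure Ω)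
    (X1 : Ω → EuclideanSpace ℝ (Fin d)) (u : EuclideanSpace ℝ (Fin d)) : ℝ :=
  Real.log (lap P X1 u).toReal

/-- The Legendre–Fenchel transform `I(v) = sup_u (u·v − K(u))`, as a rate function with values
in `[0,∞]` (the supremum may be restricted to `D_L`, since `K = +∞` outside `D_L`). -/
def rateI {d : ℕ} {Ω : Type*} [MeasurableSpace Ω] (P : Measure Ω)
    (X1 : Ω → EuclideanSpace ℝ (Fin d)) (v : EuclideanSpace ℝ (Fin d)) : ℝ≥0∞ :=
  ⨆ u ∈ lapDom P X1, ENNReal.ofReal (⟪u, v⟫ - cgfK P X1 u)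

/-- `BV[0,1]`: càdlàg functions on `[0,1]` of finite total variation. -/
def BVset (E : Type*) [NormedAddCommGroup E] : Set (ℝ → E) :=
  {h | Cadlag01 h ∧ eVariationOn h (Icc (0:ℝ) 1) ≠ ⊤}

/-- The metric `ρ_*(g,h) = ∫₀¹ |g - h| + |g(1) - h(1)|`. -/
def rhoStar {E : Type*} [NormedAddCommGroup E] (g h : ℝ → E) : ℝ :=
  (∫ s in Icc (0:ℝ) 1, ‖g s - h s‖) + ‖g 1 - h 1‖

/-- The space `(BV[0,1], ρ_*)`. -/
def BV (E : Type*) [NormedAddCommGroup E] : Type _ := ↥(BVset E)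

/-- The topology of the metric `ρ_*` on `BV[0,1]`. -/
instance BV.topologicalSpace (E : Type*) [NormedAddCommGroup E] : TopologicalSpace (BV E) where
  IsOpen S := ∀ h ∈ S, ∃ ε > (0:ℝ), ∀ g : BV E, rhoStar g.1 h.1 < ε → g ∈ S
  isOpen_univ := fun _ _ => ⟨1, one_pos, fun _ _ => trivial⟩
  isOpen_inter := by
    intro S T hS hT h hh
    obtain ⟨ε1, hε1, h1⟩ := hS h hh.1
    obtain ⟨ε2, hε2, h2⟩ := hT h hh.2
    exact ⟨min ε1 ε2, lt_min hε1 hε2, fun g hg =>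
      ⟨h1 g (lt_of_lt_of_le hg (min_le_left _ _)), h2 g (lt_of_lt_of_le hg (min_le_right _ _))⟩⟩
  isOpen_sUnion := by
    intro 𝒮 hs h hh
    obtain ⟨S, hS, hhS⟩ := hh
    obtain ⟨ε, hε, h1⟩ := hs S hS h hhS
    exact ⟨ε, hε, fun g hg => ⟨S, hS, h1 g hg⟩⟩

/-- `h` with its value at `0` replaced by `0`. -/
def zeroAt0 {E : Type*} [Zero E] (h : ℝ → E) : ℝ → E := fun t => if t = 0 then 0 else h t

/-- The rate function `I_D(h)`: the supremum, over finite partitions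
`0 = t₀ < t₁ < ⋯ < t_k = 1`, of `∑ (t_{i+1} - t_i) · I((h(t_{i+1}) - h(t_i))/(t_{i+1} - t_i))`,
with `h(t₀) = h(0)` replaced by `0`. -/
def ID {E : Type*} [NormedAddCommGroup E] [NormedSpace ℝ E] (I : E → ℝ≥0∞) (h : ℝ → E) :
    ℝ≥0∞ :=
  ⨆ (k : ℕ) (t : Fin (k+1) → ℝ) (_ : StrictMono t) (_ : t 0 = 0) (_ : t (Fin.last k) = 1),
    ∑ i : Fin k, ENNReal.ofReal (t i.succ - t i.castSucc) *
      I ((t i.succ - t i.castSucc)⁻¹ • (zeroAt0 h (t i.succ) - zeroAt0 h (t i.castSucc)))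

/-! ### The rate function `I` -/

lemma lowerSemicontinuous_rateI {d : ℕ} {Ω : Type*} [MeasurableSpace Ω] (P : Measure Ω)
    (X1 : Ω → EuclideanSpace ℝ (Fin d)) : LowerSemicontinuous (rateI P X1) := by
  unfold rateI
  refine lowerSemicontinuous_biSup fun u _ => Continuous.lowerSemicontinuous ?_
  exact ENNReal.continuous_ofReal.comp (by fun_prop)

/-- The Cramér condition makes `I` grow at least linearly: testing the supremum at `± r eᵢ ∈ D_L`
gives `r |vᵢ| ≤ I(v) + b` for each coordinate. -/
lemma exists_norm_le_rateI {d : ℕ} {Ω : Type*} [MeasurableSpace Ω] (P : Measure Ω)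
    (X1 : Ω → EuclideanSpace ℝ (Fin d))
    (hCramer : (0 : EuclideanSpace ℝ (Fin d)) ∈ interior (lapDom P X1)) :
    ∃ A B : NNReal, ∀ v, ENNReal.ofReal ‖v‖ ≤ A * rateI P X1 v + B := by
  obtain ⟨ε, hε, hball⟩ := Metric.mem_nhds_iff.1 (mem_interior_iff_mem_nhds.1 hCramer)
  set r := ε / 2 with hr
  have hr0 : 0 < r := by positivity
  have hdom : ∀ (i : Fin d) (σ : ℝ), |σ| = r →
      EuclideanSpace.single i σ ∈ lapDom P X1 := by
    intro i σ hσ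
    apply hball
    simp only [mem_ball, dist_zero_right, PiLp.norm_single, Real.norm_eq_abs, hσ]
    linarith
  set b : ℝ := ∑ i : Fin d, (|cgfK P X1 (EuclideanSpace.single i r)| +
    |cgfK P X1 (EuclideanSpace.single i (-r))|) with hb
  have hb0 : 0 ≤ b := by positivity
  have key : ∀ v (i : Fin d), ENNReal.ofReal (r * |v i|) ≤ rateI P X1 v + ENNReal.ofReal b := by
    intro v i
    -- the exponent `± r eᵢ`, with the sign of the `i`-th coordinate of `v`
    obtain ⟨σ, hσ, hσv, hσb⟩ : ∃ σ : ℝ, |σ| = r ∧ σ * v i = r * |v i| ∧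
        cgfK P X1 (EuclideanSpace.single i σ) ≤ b := by
      have hle : |cgfK P X1 (EuclideanSpace.single i r)| +
          |cgfK P X1 (EuclideanSpace.single i (-r))| ≤ b :=
        Finset.single_le_sum (f := fun i : Fin d => |cgfK P X1 (EuclideanSpace.single i r)| +
          |cgfK P X1 (EuclideanSpace.single i (-r))|) (fun j _ => by positivity)
          (Finset.mem_univ i)
      have h1 := le_abs_self (cgfK P X1 (EuclideanSpace.single i r))
      have h2 := le_abs_self (cgfK P X1 (EuclideanSpace.single i (-r)))
      have h3 := abs_nonneg (cgfK P X1 (EuclideanSpace.single i r))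
      have h4 := abs_nonneg (cgfK P X1 (EuclideanSpace.single i (-r)))
      rcases le_total 0 (v i) with h | h
      · exact ⟨r, abs_of_pos hr0, by rw [abs_of_nonneg h], by linarith⟩
      · exact ⟨-r, by rw [abs_neg, abs_of_pos hr0], by rw [abs_of_nonpos h]; ring, by linarith⟩
    have h1 : ENNReal.ofReal (r * |v i| - cgfK P X1 (EuclideanSpace.single i σ))
        ≤ rateI P X1 v := by
      refine le_trans (le_of_eq ?_) (le_iSup₂ (f := fun u (_ : u ∈ lapDom P X1) =>
        ENNReal.ofReal (⟪u, v⟫ - cgfK P X1 u)) _ (hdom i σ hσ))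
      rw [EuclideanSpace.inner_single_left]
      simp [hσv]
    calc ENNReal.ofReal (r * |v i|)
        ≤ ENNReal.ofReal ((r * |v i| - cgfK P X1 (EuclideanSpace.single i σ)) + b) :=
          ENNReal.ofReal_le_ofReal (by linarith)
      _ ≤ _ := ENNReal.ofReal_add_le.trans (by gcongr)
  refine ⟨(d * r⁻¹).toNNReal, (d * r⁻¹).toNNReal * b.toNNReal, fun v => ?_⟩
  have hn : ‖v‖ ≤ r⁻¹ * ∑ i, r * |v i| := by
    rw [← Finset.mul_sum, inv_mul_cancel_left₀ hr0.ne']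
    have hv : v = ∑ i, EuclideanSpace.single i (v i) := by
      ext j
      simp
    calc ‖v‖ = ‖∑ i, EuclideanSpace.single i (v i)‖ := by rw [← hv]
      _ ≤ ∑ i, ‖EuclideanSpace.single i (v i)‖ := norm_sum_le _ _
      _ = _ := by simp
  calc ENNReal.ofReal ‖v‖ ≤ ENNReal.ofReal (r⁻¹ * ∑ i, r * |v i|) := ENNReal.ofReal_le_ofReal hn
    _ = ENNReal.ofReal r⁻¹ * ∑ i, ENNReal.ofReal (r * |v i|) := by
        rw [ENNReal.ofReal_mul (by positivity), ENNReal.ofReal_sum_of_nonneg]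
        intro i _; positivity
    _ ≤ ENNReal.ofReal r⁻¹ * ∑ i : Fin d, (rateI P X1 v + ENNReal.ofReal b) := by
        gcongr with i; exact key v i
    _ = _ := by
        simp only [Finset.sum_const, Finset.card_univ, Fintype.card_fin, nsmul_eq_mul]
        rw [ENNReal.coe_mul]
        change _ = ENNReal.ofReal (d * r⁻¹) * _ + ENNReal.ofReal (d * r⁻¹) * ENNReal.ofReal b
        rw [ENNReal.ofReal_mul (by positivity), ENNReal.ofReal_natCast]
        ring

/-! ### Partition sums -/

section

set_option linter.unusedSectionVars false

variable {E : Type*} [NormedAddCommGroup E] [NormedSpace ℝ E]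

/-- The sum `∑ (t_{i+1} - t_i) I((x_{i+1} - x_i)/(t_{i+1} - t_i))` attached to nodes `t` and
values `x`, as a function of the pair `(t, x)`. -/
def partSum (I : E → ℝ≥0∞) (k : ℕ) (p : (Fin (k+1) → ℝ) × (Fin (k+1) → E)) : ℝ≥0∞ :=
  ∑ i : Fin k, ENNReal.ofReal (p.1 i.succ - p.1 i.castSucc) *
    I ((p.1 i.succ - p.1 i.castSucc)⁻¹ • (p.2 i.succ - p.2 i.castSucc))

lemma partSum_le_ID (I : E → ℝ≥0∞) (h : ℝ → E) {k : ℕ} {t : Fin (k+1) → ℝ}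
    (ht : StrictMono t) (h0 : t 0 = 0) (h1 : t (Fin.last k) = 1) :
    partSum I k (t, fun i => zeroAt0 h (t i)) ≤ ID I h := by
  unfold ID
  exact le_iSup_of_le k <| le_iSup_of_le t <| le_iSup_of_le ht <| le_iSup_of_le h0 <|
    le_iSup_of_le h1 le_rfl

lemma lowerSemicontinuousAt_partSum {I : E → ℝ≥0∞} (hI : LowerSemicontinuous I) {k : ℕ}
    {p : (Fin (k+1) → ℝ) × (Fin (k+1) → E)} (hp : StrictMono p.1) :
    LowerSemicontinuousAt (partSum I k) p := by
  unfold partSum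
  refine lowerSemicontinuousAt_sum fun i _ => ?_
  have hpos : 0 < p.1 i.succ - p.1 i.castSucc := sub_pos.2 (hp Fin.castSucc_lt_succ)
  have hc : ContinuousAt (fun p : (Fin (k+1) → ℝ) × (Fin (k+1) → E) =>
      (p.1 i.succ - p.1 i.castSucc)⁻¹ • (p.2 i.succ - p.2 i.castSucc)) p := by
    refine ContinuousAt.smul (ContinuousAt.inv₀ (by fun_prop) hpos.ne') (by fun_prop)
  have hc' : ContinuousAt (fun p : (Fin (k+1) → ℝ) × (Fin (k+1) → E) =>
      ENNReal.ofReal (p.1 i.succ - p.1 i.castSucc)) p :=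
    ENNReal.continuous_ofReal.continuousAt.comp (by fun_prop)
  have hl := (hI ((p.1 i.succ - p.1 i.castSucc)⁻¹ • (p.2 i.succ - p.2 i.castSucc)))
  intro y hy
  -- lower both factors slightly below their values at `p`
  obtain ⟨a, ha, b, hb, hab⟩ : ∃ a < ENNReal.ofReal (p.1 i.succ - p.1 i.castSucc), ∃ b <
      I ((p.1 i.succ - p.1 i.castSucc)⁻¹ • (p.2 i.succ - p.2 i.castSucc)), y < a * b := by
    by_contra! hcon
    exact absurd hy (not_lt.2 (ENNReal.mul_le_of_forall_lt hcon))
  filter_upwards [hc'.eventually (lt_mem_nhds ha), hc.eventually (hl b hb)] with q h1 h2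
  exact hab.trans_le (mul_le_mul' h1.le h2.le)

/-- Closedness of the constraint `partSum ≤ c` under limits of nodes and values. -/
lemma partSum_le_of_tendsto {I : E → ℝ≥0∞} (hI : LowerSemicontinuous I) {k : ℕ} {ι : Type*}
    {l : Filter ι} [l.NeBot] {q : ι → (Fin (k+1) → ℝ) × (Fin (k+1) → E)}
    {p : (Fin (k+1) → ℝ) × (Fin (k+1) → E)} (hp : StrictMono p.1) (hq : Tendsto q l (𝓝 p))
    {c : ℝ≥0∞} (hc : ∀ᶠ n in l, partSum I k (q n) ≤ c) : partSum I k p ≤ c := by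
  by_contra! hlt
  obtain ⟨n, h1, h2⟩ := (hc.and (hq.eventually
    (lowerSemicontinuousAt_partSum hI hp c hlt))).exists
  exact absurd h1 (not_le.2 h2)

/-- Under linear growth of `I`, a partition sum controls the corresponding variation sum. -/
lemma sum_edist_le_partSum {I : E → ℝ≥0∞} {A B : NNReal}
    (hAB : ∀ v, ENNReal.ofReal ‖v‖ ≤ A * I v + B) {k : ℕ} {t : Fin (k+1) → ℝ} {x : Fin (k+1) → E}
    (ht : StrictMono t) (h0 : t 0 = 0) (h1 : t (Fin.last k) = 1) :
    ∑ i : Fin k, edist (x i.succ) (x i.castSucc) ≤ A * partSum I k (t, x) + B := by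
  have hδ : ∀ i : Fin k, 0 < t i.succ - t i.castSucc := fun i =>
    sub_pos.2 (ht Fin.castSucc_lt_succ)
  have hsum : ∑ i : Fin k, ENNReal.ofReal (t i.succ - t i.castSucc) = 1 := by
    rw [← ENNReal.ofReal_sum_of_nonneg fun i _ => (hδ i).le]
    have : ∑ i : Fin k, (t i.succ - t i.castSucc) = t (Fin.last k) - t 0 := by
      have e1 := Fin.sum_univ_succ t
      have e2 := Fin.sum_univ_castSucc t
      rw [Finset.sum_sub_distrib]
      linarith
    rw [this, h0, h1]; simp
  calc ∑ i : Fin k, edist (x i.succ) (x i.castSucc)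
      ≤ ∑ i : Fin k, (A * (ENNReal.ofReal (t i.succ - t i.castSucc) *
          I ((t i.succ - t i.castSucc)⁻¹ • (x i.succ - x i.castSucc))) +
          B * ENNReal.ofReal (t i.succ - t i.castSucc)) := by
        gcongr with i
        have : edist (x i.succ) (x i.castSucc) = ENNReal.ofReal (t i.succ - t i.castSucc) *
            ENNReal.ofReal ‖(t i.succ - t i.castSucc)⁻¹ • (x i.succ - x i.castSucc)‖ := by
          rw [← ENNReal.ofReal_mul (hδ i).le, norm_smul, norm_inv, Real.norm_of_nonneg (hδ i).le,
            mul_inv_cancel_left₀ (hδ i).ne', edist_dist, dist_eq_norm]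
        rw [this]
        refine (mul_le_mul_right (hAB _) _).trans (le_of_eq ?_)
        ring
    _ = A * partSum I k (t, x) + B := by
        rw [Finset.sum_add_distrib, ← Finset.mul_sum, ← Finset.mul_sum, hsum, mul_one]
        rfl

/-- If `ID I h ≤ c`, then `h`, with its value at `0` replaced by `0`, has variation at most
`A c + B`. -/
lemma eVariationOn_zeroAt0_le {I : E → ℝ≥0∞} {A B : NNReal}
    (hAB : ∀ v, ENNReal.ofReal ‖v‖ ≤ A * I v + B) {h : ℝ → E} {c : ℝ≥0∞} (hc : ID I h ≤ c) :
    eVariationOn (zeroAt0 h) (Icc 0 1) ≤ A * c + B := by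
  set f := zeroAt0 h
  have key1 : ∀ (n : ℕ) (u : ℕ → ℝ), StrictMonoOn u (Iic n) → u 0 = 0 → u n = 1 →
      ∑ i ∈ Finset.range n, edist (f (u (i+1))) (f (u i)) ≤ A * c + B := by
    intro n u hu h0 h1
    have hs : StrictMono fun i : Fin (n+1) => u i := fun i j hij =>
      hu (by simp; omega) (by simp; omega) hij
    have := sum_edist_le_partSum hAB (x := fun i : Fin (n+1) => f (u i)) hs (by simpa) (by simpa)
    rw [Finset.sum_range]
    refine le_trans (by simpa using this) ?_
    gcongr
    exact (partSum_le_ID I h hs (by simpa) (by simpa)).trans hc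
  -- a partition that does not end at `1` is extended by the node `1`
  have key2 : ∀ (n : ℕ) (u : ℕ → ℝ), StrictMonoOn u (Iic n) → u 0 = 0 → u n ≤ 1 →
      ∑ i ∈ Finset.range n, edist (f (u (i+1))) (f (u i)) ≤ A * c + B := by
    intro n u hu h0 h1
    rcases h1.eq_or_lt with h1 | h1
    · exact key1 n u hu h0 h1
    set w : ℕ → ℝ := fun i => if i ≤ n then u i else 1 with hw
    have hwm : StrictMonoOn w (Iic (n+1)) := by
      intro i hi j hj hij
      simp only [mem_Iic] at hi hj
      have hi' : i ≤ n := by omega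
      simp only [hw, hi', if_true]
      split_ifs with hj'
      · exact hu hi' hj' hij
      · exact (hu.monotoneOn hi' (mem_Iic.2 le_rfl) hi').trans_lt h1
    have := key1 (n+1) w hwm (by simp [hw, h0]) (by simp [hw])
    rw [Finset.sum_range_succ] at this
    refine le_trans (le_of_eq ?_) (le_self_add.trans this)
    refine Finset.sum_congr rfl fun i hi => ?_
    rw [Finset.mem_range] at hi
    simp only [hw, hi.le, if_true, Nat.succ_le_of_lt hi]
  -- and a partition that does not start at `0` by the node `0`
  have key3 : ∀ (n : ℕ) (u : ℕ → ℝ), StrictMonoOn u (Iic n) → 0 ≤ u 0 → u n ≤ 1 →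
      ∑ i ∈ Finset.range n, edist (f (u (i+1))) (f (u i)) ≤ A * c + B := by
    intro n u hu h0 h1
    rcases h0.eq_or_lt with h0 | h0
    · exact key2 n u hu h0.symm h1
    set w : ℕ → ℝ := fun i => if i = 0 then 0 else u (i-1) with hw
    have hwm : StrictMonoOn w (Iic (n+1)) := by
      intro i hi j hj hij
      simp only [mem_Iic] at hi hj
      have hj' : j ≠ 0 := by omega
      simp only [hw, hj', if_false]
      split_ifs with hi'
      · exact h0.trans_le (hu.monotoneOn (by simp) (by simp; omega) (by omega))
      · exact hu (by simp; omega) (by simp; omega) (by omega)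
    have := key2 (n+1) w hwm (by simp [hw]) (by simpa [hw])
    rw [Finset.sum_range_succ'] at this
    exact le_trans (le_of_eq (by simp [hw])) (le_self_add.trans this)
  rw [eVariationOn.eVariationOn_eq_strictMonoOn]
  refine iSup_le ?_
  rintro ⟨n, u, hu, hus⟩
  exact key3 n u hu (hus 0 (by simp)).1 (hus n (by simp)).2

/-! ### Compactness -/

/-- If `φ ≤ C i` on the open `i`-th cell of the uniform grid with `N` cells, then
`∫₀¹ φ ≤ N⁻¹ ∑ C i`. Measurability of `φ` is not needed, the integral being `0` otherwise. -/
lemma integral_le_of_cells {φ : ℝ → ℝ} (hφ : ∀ s, 0 ≤ φ s) {N : ℕ} (hN : 0 < N) {C : ℕ → ℝ}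
    (hC : ∀ i, 0 ≤ C i)
    (h : ∀ i < N, ∀ s ∈ Ioo ((i : ℝ) / N) ((i + 1 : ℕ) / N), φ s ≤ C i) :
    ∫ s in Icc (0:ℝ) 1, φ s ≤ (∑ i ∈ Finset.range N, C i) / N := by
  have hN' : (0:ℝ) < N := by exact_mod_cast hN
  by_cases hint : IntegrableOn φ (Icc 0 1)
  swap
  · rw [integral_undef hint]
    exact div_nonneg (Finset.sum_nonneg fun i _ => hC i) hN'.le
  have hmono : ∀ i j : ℕ, i ≤ j → (i : ℝ) / N ≤ (j : ℝ) / N := fun i j hij => by gcongr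
  have hsum := intervalIntegral.sum_integral_adjacent_intervals (f := φ) (μ := volume)
    (a := fun i : ℕ => (i : ℝ) / N) (n := N) (fun i hi => by
      rw [intervalIntegrable_iff_integrableOn_Icc_of_le (hmono _ _ (Nat.le_succ i))]
      refine hint.mono_set (Icc_subset_Icc (by positivity) ?_)
      rw [div_le_one hN']
      exact_mod_cast hi)
  rw [integral_Icc_eq_integral_Ioc, ← intervalIntegral.integral_of_le zero_le_one]
  have e0 : ((0:ℕ):ℝ) / N = 0 := by simp
  have e1 : (N:ℝ) / N = 1 := div_self hN'.ne'
  rw [e0, e1] at hsum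
  rw [← hsum, Finset.sum_div]
  refine Finset.sum_le_sum fun i hi => ?_
  have hb := intervalIntegral.norm_integral_le_of_norm_le_const_ae (a := (i:ℝ) / N)
    (b := ((i + 1 : ℕ) : ℝ) / N) (C := C i) (f := φ) (by
      have hne : ∀ᵐ s : ℝ, s ≠ ((i + 1 : ℕ) : ℝ) / N := by
        simp [ae_iff, measure_singleton]
      filter_upwards [hne] with s hs hmem
      rw [uIoc_of_le (hmono _ _ (Nat.le_succ i))] at hmem
      rw [Real.norm_of_nonneg (hφ s)]
      exact h i (Finset.mem_range.1 hi) s ⟨hmem.1, lt_of_le_of_ne hmem.2 hs⟩)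
  refine (le_abs_self _).trans (hb.trans (le_of_eq ?_))
  have : ((i + 1 : ℕ) : ℝ) / N - i / N = 1 / N := by push_cast; ring
  rw [this, abs_of_pos (by positivity)]
  ring

/-- The nearest-point projection of `ℝ` onto `[0,1]`. -/
def proj01 (t : ℝ) : ℝ := max 0 (min t 1)

lemma proj01_mem (t : ℝ) : proj01 t ∈ Icc (0:ℝ) 1 :=
  ⟨le_max_left _ _, max_le zero_le_one (min_le_right _ _)⟩

lemma proj01_of_mem {t : ℝ} (ht : t ∈ Icc (0:ℝ) 1) : proj01 t = t := by
  simp [proj01, ht.1, ht.2]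

lemma monotone_proj01 : Monotone proj01 := fun _ _ h =>
  max_le_max le_rfl (min_le_min h le_rfl)

/-- The extension to `ℝ` of `h : [0,1] → E`, with `h 0` replaced by `0`, that is constant on each
side of `[0,1]`. -/
def ext01 (h : ℝ → E) (t : ℝ) : E := zeroAt0 h (proj01 t)

/-- Over cells `[a i, a (i+1)]` the variations of `f` sum up to its variation over
`[a 0, a N]`, hence to at most any bound `M` for the total variation. -/
lemma sum_cell_variation_le {f : ℝ → E} {M : NNReal} (hf : eVariationOn f univ ≤ M)
    {a : ℕ → ℝ} (ha : Monotone a) (N : ℕ) :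
    ∑ i ∈ Finset.range N, (eVariationOn f (Icc (a i) (a (i+1)))).toReal ≤ M := by
  have hfin : ∀ s, eVariationOn f s ≠ ⊤ := fun s =>
    ne_top_of_le_ne_top ENNReal.coe_ne_top ((eVariationOn.mono f (subset_univ s)).trans hf)
  rw [← ENNReal.toReal_sum fun i _ => hfin _, eVariationOn.sum' f ha]
  exact ENNReal.toReal_le_of_le_ofReal M.2
    (by simpa using (eVariationOn.mono f (subset_univ _)).trans hf)

lemma norm_sub_le_variation {f : ℝ → E} {M : NNReal} (hf : eVariationOn f univ ≤ M)
    {s : Set ℝ} {x y : ℝ} (hx : x ∈ s) (hy : y ∈ s) :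
    ‖f x - f y‖ ≤ (eVariationOn f s).toReal := by
  have hfin : eVariationOn f s ≠ ⊤ :=
    ne_top_of_le_ne_top ENNReal.coe_ne_top ((eVariationOn.mono f (subset_univ s)).trans hf)
  rw [← dist_eq_norm]
  exact BoundedVariationOn.dist_le hfin hx hy

/-- On the grid with `N` cells: `x` is `ρ_*`-close to the right-limit of `g` once `ext01 x` is close
to `g` at the nodes. -/
lemma rhoStar_le [ProperSpace E] {x g : ℝ → E} {M : NNReal}
    (hx : eVariationOn (ext01 x) univ ≤ M)
    (hg : eVariationOn g univ ≤ M) (hg1 : g.rightLim 1 = g 1) {N : ℕ} (hN : 0 < N) {η : ℝ}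
    (hη : 0 ≤ η) (hnode : ∀ i ≤ N, ‖ext01 x ((i : ℝ) / N) - g ((i : ℝ) / N)‖ ≤ η) :
    rhoStar x g.rightLim ≤ 2 * M / N + 2 * η := by
  have hN' : (0:ℝ) < N := by exact_mod_cast hN
  have hgb : BoundedVariationOn g univ := ne_top_of_le_ne_top ENNReal.coe_ne_top hg
  set a : ℕ → ℝ := fun i => (i : ℝ) / N with ha
  have hmono : Monotone a := fun i j hij => by simp only [ha]; gcongr
  set V := fun i => (eVariationOn (ext01 x) (Icc (a i) (a (i+1)))).toReal with hV
  set W := fun i => (eVariationOn g (Icc (a i) (a (i+1)))).toReal with hW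
  have hint : ∫ s in Icc (0:ℝ) 1, ‖x s - g.rightLim s‖ ≤
      (∑ i ∈ Finset.range N, (V i + η + W i)) / N := by
    refine integral_le_of_cells (fun s => norm_nonneg _) hN (fun i => by positivity) ?_
    intro i hi s hs
    have hs' : s ∈ Icc (a i) (a (i+1)) := ⟨hs.1.le, hs.2.le⟩
    have hb : a (i+1) ∈ Icc (a i) (a (i+1)) := ⟨hs'.1.trans hs'.2, le_rfl⟩
    have hb1 : a (i+1) ≤ 1 := by
      simp only [ha]; rw [div_le_one hN']; exact_mod_cast hi
    have hs0 : 0 < s := lt_of_le_of_lt (by positivity) hs.1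
    have hfx : ext01 x s = x s := by
      rw [ext01, proj01_of_mem ⟨hs0.le, hs'.2.trans hb1⟩, zeroAt0, if_neg hs0.ne']
    have h1 : ‖x s - ext01 x (a (i+1))‖ ≤ V i := by
      rw [← hfx]; exact norm_sub_le_variation hx hs' hb
    have h2 : ‖ext01 x (a (i+1)) - g (a (i+1))‖ ≤ η := hnode (i+1) hi
    have h3 : ‖g (a (i+1)) - g.rightLim s‖ ≤ W i := by
      refine le_of_tendsto ((tendsto_const_nhds.sub (hgb.tendsto_rightLim s)).norm) ?_
      filter_upwards [Ioo_mem_nhdsGT hs.2] with r hr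
      exact norm_sub_le_variation hg hb ⟨hs'.1.trans hr.1.le, hr.2.le⟩
    calc ‖x s - g.rightLim s‖ = ‖(x s - ext01 x (a (i+1))) +
          (ext01 x (a (i+1)) - g (a (i+1))) + (g (a (i+1)) - g.rightLim s)‖ := by
          congr 1; abel
      _ ≤ _ := norm_add₃_le
      _ ≤ _ := by gcongr
  have hsum : ∑ i ∈ Finset.range N, (V i + η + W i) ≤ 2 * M + N * η := by
    have h1 := sum_cell_variation_le hx hmono N
    have h2 := sum_cell_variation_le hg hmono N
    rw [Finset.sum_add_distrib, Finset.sum_add_distrib]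
    simp only [Finset.sum_const, Finset.card_range, nsmul_eq_mul]
    linarith
  have hend : ‖x 1 - g.rightLim 1‖ ≤ η := by
    have := hnode N le_rfl
    rw [div_self hN'.ne', ext01, proj01_of_mem ⟨zero_le_one, le_rfl⟩, zeroAt0,
      if_neg one_ne_zero] at this
    rwa [hg1]
  have : (2 * M + N * η) / N = 2 * M / N + η := by field_simp
  unfold rhoStar
  calc _ ≤ (2 * M + N * η) / N + η := by
        gcongr
        exact hint.trans (by gcongr)
    _ = _ := by rw [this]; ring

/-- The right-limit of a function of bounded variation lies in `BV[0,1]`. -/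
lemma rightLim_mem_BVset [ProperSpace E] {g : ℝ → E} (hg : BoundedVariationOn g univ) :
    g.rightLim ∈ BVset E := by
  refine ⟨⟨fun t _ => ?_, fun t _ => ?_⟩, (hg.rightLim.mono (subset_univ _))⟩
  · exact (hg.continuousWithinAt_rightLim (x := t)).mono Ioi_subset_Ici_self
  · exact ⟨_, hg.rightLim.tendsto_leftLim t⟩

/-- The bound on partition sums passes from `g` to its right-limit: the interior nodes are
shifted to the right by a vanishing amount. -/
lemma ID_rightLim_le [ProperSpace E] {I : E → ℝ≥0∞} (hI : LowerSemicontinuous I) {g : ℝ → E}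
    (hg : BoundedVariationOn g univ) (hg0 : g 0 = 0) (hg1 : g.rightLim 1 = g 1) {c : ℝ≥0∞}
    (hc : ∀ (k : ℕ) (t : Fin (k+1) → ℝ), StrictMono t → t 0 = 0 → t (Fin.last k) = 1 →
      partSum I k (t, fun i => g (t i)) ≤ c) :
    ID I g.rightLim ≤ c := by
  unfold ID
  refine iSup_le fun k => iSup_le fun t => iSup_le fun ht => iSup_le fun h0 => iSup_le fun h1 => ?_
  have ht0 : ∀ i, 0 ≤ t i := fun i => h0 ▸ ht.monotone (Fin.zero_le i)
  have ht1 : ∀ i, t i ≤ 1 := fun i => h1 ▸ ht.monotone (Fin.le_last i)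
  -- the displaced node
  set σ : ℝ → ℝ → ℝ := fun ε x => if x = 0 then 0 else min (x + ε) 1 with hσ
  have hσt : ∀ i, Tendsto (fun ε => σ ε (t i)) (𝓝[>] 0) (𝓝 (t i)) := by
    intro i
    by_cases hi : t i = 0
    · simp only [hσ, hi, if_true]; exact tendsto_const_nhds
    · simp only [hσ, hi, if_false]
      have : Tendsto (fun ε : ℝ => min (t i + ε) 1) (𝓝 0) (𝓝 (min (t i + 0) 1)) :=
        Continuous.tendsto (by fun_prop) _
      rw [add_zero, min_eq_left (ht1 i)] at this
      exact this.mono_left nhdsWithin_le_nhds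
  have hgt : ∀ i, Tendsto (fun ε => g (σ ε (t i))) (𝓝[>] 0) (𝓝 (zeroAt0 g.rightLim (t i))) := by
    intro i
    by_cases hi : t i = 0
    · simp only [hσ, hi, if_true, zeroAt0, hg0]; exact tendsto_const_nhds
    simp only [hσ, hi, if_false, zeroAt0]
    rcases (ht1 i).eq_or_lt with hi1 | hi1
    · rw [hi1, hg1]
      refine tendsto_const_nhds.congr' ?_
      filter_upwards [self_mem_nhdsWithin] with ε hε
      rw [min_eq_right (by linarith [mem_Ioi.1 hε])]
    · refine (hg.tendsto_rightLim (t i)).comp ?_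
      have h2 := hσt i
      simp only [hσ, hi, if_false] at h2
      refine tendsto_nhdsWithin_iff.2 ⟨h2, ?_⟩
      filter_upwards [self_mem_nhdsWithin] with ε hε
      exact lt_min (by linarith [mem_Ioi.1 hε]) hi1
  refine partSum_le_of_tendsto hI (p := (t, fun i => zeroAt0 g.rightLim (t i))) (l := 𝓝[>] (0:ℝ))
    (q := fun ε => (fun i => σ ε (t i), fun i => g (σ ε (t i)))) ht
    ((tendsto_pi_nhds.2 hσt).prodMk_nhds (tendsto_pi_nhds.2 hgt)) ?_
  have hmono : ∀ᶠ ε in 𝓝[>] (0:ℝ), ∀ i : Fin k, σ ε (t i.castSucc) < σ ε (t i.succ) :=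
    eventually_all.2 fun i => (hσt _).eventually_lt (hσt _) (ht Fin.castSucc_lt_succ)
  filter_upwards [hmono, self_mem_nhdsWithin] with ε hε hε0
  refine hc k _ (Fin.strictMono_iff_lt_succ.2 hε) (by simp [hσ, h0]) ?_
  simp only [hσ, h1, one_ne_zero, if_false]
  exact min_eq_right (by linarith [mem_Ioi.1 hε0])

/-- Compactness of the sub-level sets of `ID I` for every lower semicontinuous `I` of at least
linear growth. -/
theorem isCompact_ID_le [ProperSpace E] {I : E → ℝ≥0∞} (hI : LowerSemicontinuous I) {A B : NNReal}
    (hAB : ∀ v, ENNReal.ofReal ‖v‖ ≤ A * I v + B) (c : NNReal) :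
    IsCompact {h : BV E | ID I h.1 ≤ (c : ℝ≥0∞)} := by
  rw [isCompact_iff_ultrafilter_le_nhds']
  intro F hF
  set M : NNReal := A * c + B with hM
  have hvar : ∀ x : BV E, ID I x.1 ≤ c → eVariationOn (ext01 x.1) univ ≤ M := by
    intro x hx
    refine (eVariationOn.comp_le_of_monotoneOn (zeroAt0 x.1) proj01
      (monotone_proj01.monotoneOn _) (fun t _ => proj01_mem t)).trans ?_
    simpa [hM] using eVariationOn_zeroAt0_le hAB hx
  have hf0 : ∀ x : ℝ → E, ext01 x 0 = 0 := fun x => by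
    rw [ext01, proj01_of_mem ⟨le_rfl, zero_le_one⟩, zeroAt0, if_pos rfl]
  -- pointwise limits along the ultrafilter exist by compactness of the ball of radius `M`
  have hlim : ∀ t : ℝ, ∃ y, Tendsto (fun x : BV E => ext01 x.1 t) F (𝓝 y) := by
    intro t
    obtain ⟨y, -, hy⟩ := (isCompact_closedBall (0:E) M).ultrafilter_le_nhds'
      (F.map fun x : BV E => ext01 x.1 t) (by
        refine Ultrafilter.mem_map.2 (Filter.mem_of_superset hF fun x hx => ?_)
        have h1 := norm_sub_le_variation (hvar x hx) (mem_univ t) (mem_univ 0)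
        rw [hf0, sub_zero] at h1
        simp only [mem_preimage, mem_closedBall, dist_zero_right]
        exact h1.trans (ENNReal.toReal_le_of_le_ofReal M.2 (by simpa using hvar x hx)))
    exact ⟨y, hy⟩
  choose g hg using hlim
  have hgvar : eVariationOn g univ ≤ M := by
    by_contra! hlt
    obtain ⟨x, h1, h2⟩ := ((eVariationOn.lowerSemicontinuous_aux
      (fun t _ => hg t) hlt).and (show ∀ᶠ x in (F : Filter (BV E)), ID I x.1 ≤ c from hF)).exists
    exact absurd (hvar x h2) (not_le.2 h1)
  have hgb : BoundedVariationOn g univ := ne_top_of_le_ne_top ENNReal.coe_ne_top hgvar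
  have hg0 : g 0 = 0 := tendsto_nhds_unique (hg 0) (by simp only [hf0]; exact tendsto_const_nhds)
  have hg1 : g.rightLim 1 = g 1 := by
    have hconst : ∀ t : ℝ, 1 ≤ t → g t = g 1 := fun t ht => by
      refine tendsto_nhds_unique (hg t) ?_
      have : ∀ x : BV E, ext01 x.1 t = ext01 x.1 1 := fun x => by
        simp [ext01, proj01, ht]
      simpa only [this] using hg 1
    refine tendsto_nhds_unique (hgb.tendsto_rightLim 1) (tendsto_const_nhds.congr' ?_)
    filter_upwards [self_mem_nhdsWithin] with t ht
    exact (hconst t (le_of_lt ht)).symm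
  have hgpart : ∀ (k : ℕ) (t : Fin (k+1) → ℝ), StrictMono t → t 0 = 0 → t (Fin.last k) = 1 →
      partSum I k (t, fun i => g (t i)) ≤ c := by
    intro k t ht h0 h1
    refine partSum_le_of_tendsto hI (p := (t, fun i => g (t i))) (l := (F : Filter (BV E)))
      (q := fun x => (t, fun i => ext01 x.1 (t i))) ht
      (tendsto_const_nhds.prodMk_nhds (tendsto_pi_nhds.2 fun i => hg (t i))) ?_
    refine Filter.mem_of_superset hF fun x hx => ?_
    have he : ∀ i, ext01 x.1 (t i) = zeroAt0 x.1 (t i) := fun i => by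
      rw [ext01, proj01_of_mem]
      exact ⟨h0 ▸ ht.monotone (Fin.zero_le i), h1 ▸ ht.monotone (Fin.le_last i)⟩
    simp only [mem_ofPred_eq, he]
    exact (partSum_le_ID I x.1 ht h0 h1).trans hx
  let h : BV E := ⟨g.rightLim, rightLim_mem_BVset hgb⟩
  refine ⟨h, ID_rightLim_le hI hgb hg0 hg1 hgpart, ?_⟩
  rw [le_nhds_iff]
  intro U hU hUo
  obtain ⟨ε, hε, hball⟩ := hUo _ hU
  obtain ⟨N, hN⟩ := exists_nat_gt (4 * (M : ℝ) / ε)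
  have hN' : (0:ℝ) < N := lt_of_le_of_lt (by positivity) hN
  have hN0 : 0 < N := by exact_mod_cast hN'
  have hnode : ∀ᶠ x : BV E in F, ∀ i ∈ Finset.range (N+1),
      ‖ext01 x.1 ((i : ℝ) / N) - g ((i : ℝ) / N)‖ < ε / 4 := by
    rw [Finset.eventually_all]
    intro i _
    have := ((hg ((i : ℝ) / N)).sub_const (g ((i : ℝ) / N))).norm
    rw [sub_self, norm_zero] at this
    exact this.eventually_lt_const (by positivity)
  filter_upwards [hnode, hF] with x hx hxF
  refine hball x ((rhoStar_le (hvar x hxF) hgvar hg1 hN0 (by positivity : (0:ℝ) ≤ ε / 4)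
    fun i hi => (hx i (Finset.mem_range.2 (by omega))).le).trans_lt ?_)
  have : 2 * (M : ℝ) / N < ε / 2 := by
    rw [div_lt_iff₀ hε] at hN
    rw [div_lt_iff₀ hN']
    linarith
  linarith

end

/-- Under the Cramér moment assumption, `I_D` is a tight rate function on `(BV[0,1], ρ_*)`:
all its sub-level sets are compact. -/
theorem ID_tight_on_BV_rhoStar
    {d : ℕ} {Ω : Type*} [MeasurableSpace Ω] (P : Measure Ω) [IsProbabilityMeasure P]
    (X1 : Ω → EuclideanSpace ℝ (Fin d)) (hX1 : Measurable X1)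
    (hCramer : (0 : EuclideanSpace ℝ (Fin d)) ∈ interior (lapDom P X1)) :
    ∀ c : NNReal,
      IsCompact {h : BV (EuclideanSpace ℝ (Fin d)) | ID (rateI P X1) h.1 ≤ (c : ℝ≥0∞)} := by
  obtain ⟨A, B, hAB⟩ := exists_norm_le_rateI P X1 hCramer
  exact isCompact_ID_le (lowerSemicontinuous_rateI P X1) hAB
end
end

section
/- Integral representation of the rate function I_D in dimension one: assume d = 1 and the Cramér moment assumption 0 ∈ interior(D_L). Let h ∈ BV([0,1];ℝ), let μ_h be the unique signed Borel measure on [0,1] with μ_h([0,t]) = h(t) for all t ∈ [0,1], let μ_h = ρ·dt + μ_s be its Lebesgue decomposition with respect to Lebesgue measure on [0,1] (ρ ∈ L¹[0,1] the density of the absolutely continuous part, μ_s singular), and let μ_s = μ_s⁺ − μ_s⁻ be the Jordan decomposition of μ_s. Then, as an equality in [0,∞] with the convention ∞·0 := 0, I_D(h) = ∫₀¹ I(ρ(t)) dt + I_∞(1)·μ_s⁺([0,1]) + I_∞(−1)·μ_s⁻([0,1]). -/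
/-!
Write `μ = dt + μ_s⁺ + μ_s⁻` on `[0,1]` and let `F = (dμ_h/dμ, dt/dμ)`. The three measures live on
disjoint sets, so `F` equals `(ρ, 1)`, `(1, 0)` and `(-1, 0)` almost everywhere for `dt`, `μ_s⁺` and
`μ_s⁻`. Let `ψ(a, b) = sup_{u ∈ D_L} (u a − K(u) b)⁺`, which is convex, positively homogeneous and
lower semicontinuous, with `ψ(v, 1) = I(v)` and `ψ(±1, 0) = I_∞(±1)`. The right-hand side of the
formula is therefore `∫ ψ(F) dμ`.

By homogeneity, the term of a partition sum of `I_D` belonging to a cell `J` is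
`ψ(∫_J F dμ) = μ(J) ψ(⨍_J F dμ)` (`term_eq`, `measure_mul_persp_average`); replacing `h(0)` by `0`
amounts to including `0` in the first cell. Jensen's inequality (`persp_integral_le`) bounds each
partition sum by `∫ ψ(F) dμ`. Conversely, the averages of `F` over the cells of uniform partitions
converge to `F` in `L¹(μ)` (`cellAvg_tendsto`), hence almost everywhere along a subsequence, and
Fatou's lemma with the lower semicontinuity of `ψ` gives the reverse bound (`lintegral_persp_le`).
-/

open Set Filter Topology MeasureTheory
open scoped ENNReal

noncomputable section

/-- The Laplace transform `L(u) = E[exp(u·X₁)]` of a real random variable. -/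
def lap1 {Ω : Type*} [MeasurableSpace Ω] (P : Measure Ω) (X1 : Ω → ℝ) (u : ℝ) : ℝ≥0∞ :=
  ∫⁻ ω, ENNReal.ofReal (Real.exp (u * X1 ω)) ∂P

/-- The effective domain `D_L` of the Laplace transform. -/
def lapDom1 {Ω : Type*} [MeasurableSpace Ω] (P : Measure Ω) (X1 : Ω → ℝ) : Set ℝ :=
  {u | lap1 P X1 u ≠ ⊤}

/-- The cumulant generating function `K = log L` (junk value where `L = ∞`). -/
def cgfK1 {Ω : Type*} [MeasurableSpace Ω] (P : Measure Ω) (X1 : Ω → ℝ) (u : ℝ) : ℝ :=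
  Real.log (lap1 P X1 u).toReal

/-- The Legendre–Fenchel transform `I(v) = sup_u (u v − K(u))`, with values in `[0,∞]`. -/
def rateI1 {Ω : Type*} [MeasurableSpace Ω] (P : Measure Ω) (X1 : Ω → ℝ) (v : ℝ) : ℝ≥0∞ :=
  ⨆ u ∈ lapDom1 P X1, ENNReal.ofReal (u * v - cgfK1 P X1 u)

/-- The support function value `I_∞(1) = sup { u : u ∈ D_L }`, in `[0,∞]`. -/
def IinfP {Ω : Type*} [MeasurableSpace Ω] (P : Measure Ω) (X1 : Ω → ℝ) : ℝ≥0∞ :=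
  ⨆ u ∈ lapDom1 P X1, ENNReal.ofReal u

/-- The support function value `I_∞(−1) = sup { −u : u ∈ D_L }`, in `[0,∞]`. -/
def IinfM {Ω : Type*} [MeasurableSpace Ω] (P : Measure Ω) (X1 : Ω → ℝ) : ℝ≥0∞ :=
  ⨆ u ∈ lapDom1 P X1, ENNReal.ofReal (-u)

/-! ### The perspective of the rate function -/

/-- The convex, positively homogeneous function `p ↦ sup_{u ∈ D} (u p₁ − K(u) p₂)⁺`. With `D` and
`K` the domain and values of a cumulant generating function, it is the perspective of the rate
function: `persp D K (v, 1) = I(v)` and `persp D K (±1, 0) = I_∞(±1)`. -/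
def persp (D : Set ℝ) (K : ℝ → ℝ) (p : ℝ × ℝ) : ℝ≥0∞ :=
  ⨆ u ∈ D, ENNReal.ofReal (u * p.1 - K u * p.2)

lemma persp_lowerSemicontinuous (D : Set ℝ) (K : ℝ → ℝ) : LowerSemicontinuous (persp D K) := by
  refine lowerSemicontinuous_biSup fun u _ => Continuous.lowerSemicontinuous ?_
  exact ENNReal.continuous_ofReal.comp (by fun_prop)

lemma persp_smul (D : Set ℝ) (K : ℝ → ℝ) {c : ℝ} (hc : 0 ≤ c) (p : ℝ × ℝ) :
    persp D K (c • p) = ENNReal.ofReal c * persp D K p := by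
  unfold persp
  simp only [ENNReal.mul_iSup, ← ENNReal.ofReal_mul hc]
  refine iSup_congr fun u => iSup_congr fun _ => ?_
  congr 1
  simp only [Prod.smul_fst, Prod.smul_snd, smul_eq_mul]
  ring

lemma ofReal_integral_le_lintegral_ofReal {α : Type*} [MeasurableSpace α] {μ : Measure α}
    {f : α → ℝ} (hf : Integrable f μ) :
    ENNReal.ofReal (∫ x, f x ∂μ) ≤ ∫⁻ x, ENNReal.ofReal (f x) ∂μ := by
  rw [integral_eq_lintegral_pos_part_sub_lintegral_neg_part hf]
  refine (ENNReal.ofReal_le_ofReal (sub_le_self _ ENNReal.toReal_nonneg)).trans ?_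
  exact ENNReal.ofReal_toReal_le

/-- Jensen's inequality in the homogeneous form that needs no normalisation. -/
lemma persp_integral_le (D : Set ℝ) (K : ℝ → ℝ) {μ : Measure ℝ} {F : ℝ → ℝ × ℝ}
    (hF : Integrable F μ) :
    persp D K (∫ x, F x ∂μ) ≤ ∫⁻ x, persp D K (F x) ∂μ := by
  refine iSup₂_le fun u hu => ?_
  have h1 : Integrable (fun x => (F x).1) μ := hF.fst
  have h2 : Integrable (fun x => (F x).2) μ := hF.snd
  have e : u * (∫ x, F x ∂μ).1 - K u * (∫ x, F x ∂μ).2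
      = ∫ x, (u * (F x).1 - K u * (F x).2) ∂μ := by
    rw [integral_sub (h1.const_mul u) (h2.const_mul (K u)), integral_const_mul,
      integral_const_mul, fst_integral hF, snd_integral hF]
  rw [e]
  refine (ofReal_integral_le_lintegral_ofReal
    ((h1.const_mul u).sub (h2.const_mul (K u)))).trans (lintegral_mono fun x => ?_)
  exact le_iSup₂ (f := fun u (_ : u ∈ D) => ENNReal.ofReal (u * (F x).1 - K u * (F x).2)) u hu

/-- Equality case of `persp_integral_le`: `F` replaced by its mean. -/
lemma measure_mul_persp_average (D : Set ℝ) (K : ℝ → ℝ) {μ : Measure ℝ} [IsFiniteMeasure μ]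
    (F : ℝ → ℝ × ℝ) :
    μ univ * persp D K (⨍ x, F x ∂μ) = persp D K (∫ x, F x ∂μ) := by
  rw [← measure_smul_average, persp_smul _ _ measureReal_nonneg, measureReal_def,
    ENNReal.ofReal_toReal (measure_ne_top _ _)]

/-! ### Partitions of `[0,1]` -/

/-- The interval `[0,t]`, made empty at `t = 0`: this encodes the replacement of `h(0)` by `0`. -/
def initSeg (t : ℝ) : Set ℝ := if t = 0 then ∅ else Icc 0 t

lemma initSeg_measurable (t : ℝ) : MeasurableSet (initSeg t) := by
  unfold initSeg; split_ifs <;> simp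

lemma initSeg_mono {s t : ℝ} (hs : 0 ≤ s) (hst : s ≤ t) : initSeg s ⊆ initSeg t := by
  unfold initSeg
  split_ifs with h1 h2 h2
  · simp
  · simp
  · exact absurd (le_antisymm (h2 ▸ hst) hs) h1
  · exact Icc_subset_Icc_right hst

lemma lintegral_telescope (μ : Measure ℝ) (φ : ℝ → ℝ≥0∞) {C : ℕ → Set ℝ} (hC : Monotone C)
    (hm : ∀ n, MeasurableSet (C n)) (h0 : C 0 = ∅) (k : ℕ) :
    ∑ i ∈ Finset.range k, ∫⁻ x in C (i + 1) \ C i, φ x ∂μ = ∫⁻ x in C k, φ x ∂μ := by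
  induction k with
  | zero => simp [h0]
  | succ k ih =>
    rw [Finset.sum_range_succ, ih, ← lintegral_union ((hm _).diff (hm _)) disjoint_sdiff_right,
      union_sdiff_cancel (hC k.le_succ)]

/-- The `i`-th cell of the uniform partition of `[0,1]` into `n + 1` pieces: `(i/(n+1), (i+1)/(n+1)]`,
closed at `0` when `i = 0`. -/
def unifCell (n i : ℕ) : Set ℝ :=
  initSeg (((i + 1 : ℕ) : ℝ) / (n + 1)) \ initSeg ((i : ℝ) / (n + 1))

lemma unif_mono (n : ℕ) : Monotone fun i : ℕ => initSeg ((i : ℝ) / (n + 1)) := by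
  intro i j hij
  exact initSeg_mono (by positivity) (by gcongr)

lemma unifCell_measurable (n i : ℕ) : MeasurableSet (unifCell n i) :=
  (initSeg_measurable _).diff (initSeg_measurable _)

lemma unifCell_disjoint {n i j : ℕ} {x : ℝ} (hi : x ∈ unifCell n i) (hj : x ∈ unifCell n j) :
    i = j := by
  by_contra hne
  rcases lt_or_gt_of_ne hne with hlt | hlt
  · exact hj.2 (unif_mono n (Nat.succ_le_of_lt hlt) hi.1)
  · exact hi.2 (unif_mono n (Nat.succ_le_of_lt hlt) hj.1)

lemma unifCell_dist {n i : ℕ} {x y : ℝ} (hx : x ∈ unifCell n i) (hy : y ∈ unifCell n i) :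
    dist x y ≤ 1 / ((n : ℝ) + 1) := by
  have key : ∀ z ∈ unifCell n i, z ∈ Icc ((i : ℝ) / (n + 1)) ((i : ℝ) / (n + 1) + 1 / (n + 1)) := by
    intro z hz
    obtain ⟨h1, h2⟩ := hz
    have e : ((i + 1 : ℕ) : ℝ) / (n + 1) = (i : ℝ) / (n + 1) + 1 / (n + 1) := by
      push_cast; ring
    rw [e] at h1
    have hpos : (i : ℝ) / (n + 1) + 1 / (n + 1) ≠ 0 := by positivity
    rw [initSeg, if_neg hpos] at h1
    refine ⟨?_, h1.2⟩
    by_cases h0 : (i : ℝ) / (n + 1) = 0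
    · rw [h0]; exact h1.1
    · rw [initSeg, if_neg h0] at h2
      by_contra hlt
      exact h2 ⟨h1.1, (not_le.1 hlt).le⟩
  have := Real.dist_le_of_mem_Icc (key x hx) (key y hy)
  linarith

lemma lintegral_unifCell (μ : Measure ℝ) (φ : ℝ → ℝ≥0∞) (n : ℕ) :
    ∑ i ∈ Finset.range (n + 1), ∫⁻ x in unifCell n i, φ x ∂μ = ∫⁻ x in Icc 0 1, φ x ∂μ := by
  have h := lintegral_telescope μ φ (unif_mono n) (fun _ => initSeg_measurable _)
    (by simp [initSeg]) (n + 1)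
  have e : ((n + 1 : ℕ) : ℝ) / (n + 1) = 1 := by
    push_cast; field_simp
  simp only [e] at h
  rw [show initSeg 1 = Icc (0:ℝ) 1 by simp [initSeg]] at h
  exact h

/-! ### Averages over uniform partitions -/

/-- The conditional expectation of `F` on the uniform partition of `[0,1]` into `n + 1` pieces. -/
def cellAvg {E : Type*} [NormedAddCommGroup E] [NormedSpace ℝ E]
    (μ : Measure ℝ) (F : ℝ → E) (n : ℕ) (x : ℝ) : E :=
  ∑ i ∈ Finset.range (n + 1), (unifCell n i).indicator (fun _ => ⨍ y in unifCell n i, F y ∂μ) x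

lemma cellAvg_eq {E : Type*} [NormedAddCommGroup E] [NormedSpace ℝ E]
    (μ : Measure ℝ) (F : ℝ → E) {n i : ℕ} (hi : i ∈ Finset.range (n + 1)) {x : ℝ}
    (hx : x ∈ unifCell n i) : cellAvg μ F n x = ⨍ y in unifCell n i, F y ∂μ := by
  unfold cellAvg
  rw [Finset.sum_eq_single_of_mem i hi, indicator_of_mem hx]
  intro j _ hj
  exact indicator_of_notMem (fun h => hj (unifCell_disjoint h hx)) _

lemma cellAvg_stronglyMeasurable {E : Type*} [NormedAddCommGroup E] [NormedSpace ℝ E]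
    (μ : Measure ℝ) (F : ℝ → E) (n : ℕ) : StronglyMeasurable (cellAvg μ F n) := by
  refine Finset.stronglyMeasurable_fun_sum _ fun i _ => ?_
  exact stronglyMeasurable_const.indicator (unifCell_measurable n i)

/-- If `φ` oscillates by at most `ε` on `S`, then `F` is within
`2‖F − φ‖₁ + ε μ(S)` of its mean over `S` in `L¹(S)`. -/
lemma lintegral_average_sub_le {E : Type*} [NormedAddCommGroup E] [NormedSpace ℝ E]
    [CompleteSpace E] {μ : Measure ℝ} [IsFiniteMeasure μ] {S : Set ℝ} (hS : MeasurableSet S)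
    {F φ : ℝ → E} (hF : Integrable F μ) (hφ : Integrable φ μ) {ε : ℝ≥0∞}
    (hosc : ∀ x ∈ S, ∀ y ∈ S, ‖φ x - φ y‖ₑ ≤ ε) :
    ∫⁻ x in S, ‖(⨍ y in S, F y ∂μ) - F x‖ₑ ∂μ
      ≤ 2 * (∫⁻ x in S, ‖F x - φ x‖ₑ ∂μ) + ε * μ S := by
  by_cases h0 : μ S = 0
  · rw [Measure.restrict_eq_zero.2 h0]; simp
  have hFS : IntegrableOn F S μ := hF.integrableOn
  have hφS : IntegrableOn φ S μ := hφ.integrableOn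
  set J := ∫⁻ x in S, ‖F x - φ x‖ₑ ∂μ with hJ
  have avg_enorm : ∀ G : ℝ → E, μ S * ‖⨍ y in S, G y ∂μ‖ₑ ≤ ∫⁻ y in S, ‖G y‖ₑ ∂μ := by
    intro G
    refine le_trans (le_of_eq ?_) (enorm_integral_le_lintegral_enorm _)
    rw [← measure_smul_average, enorm_smul, measureReal_def, Measure.restrict_apply_univ,
      Real.enorm_eq_ofReal ENNReal.toReal_nonneg, ENNReal.ofReal_toReal (measure_ne_top _ _)]
  have havg_sub : ∀ G H : ℝ → E, IntegrableOn G S μ → IntegrableOn H S μ →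
      (⨍ y in S, G y ∂μ) - (⨍ y in S, H y ∂μ) = ⨍ y in S, (G y - H y) ∂μ := by
    intro G H hG hH
    rw [setAverage_eq, setAverage_eq, setAverage_eq, integral_sub hG hH, smul_sub]
  have hconst : ∀ c : E, (⨍ _y in S, c ∂μ) = c :=
    fun c => setAverage_const h0 (measure_ne_top _ _) c
  have hpt : ∀ x ∈ S, ‖(⨍ y in S, F y ∂μ) - F x‖ₑ
      ≤ ‖⨍ y in S, (F y - φ y) ∂μ‖ₑ + (ε + ‖F x - φ x‖ₑ) := by
    intro x hx
    have hφx : ‖⨍ y in S, (φ y - φ x) ∂μ‖ₑ ≤ ε := by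
      have h1 : μ S * ‖⨍ y in S, (φ y - φ x) ∂μ‖ₑ ≤ μ S * ε := by
        refine (avg_enorm _).trans ?_
        calc ∫⁻ y in S, ‖φ y - φ x‖ₑ ∂μ ≤ ∫⁻ _y in S, ε ∂μ :=
              setLIntegral_mono' hS fun y hy => hosc y hy x hx
          _ = μ S * ε := by rw [setLIntegral_const, mul_comm]
      exact (ENNReal.mul_le_mul_iff_right h0 (measure_ne_top _ _)).1 h1
    have e : (⨍ y in S, F y ∂μ) - F x = (⨍ y in S, (F y - φ y) ∂μ)
        + ((⨍ y in S, (φ y - φ x) ∂μ) + (φ x - F x)) := by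
      rw [← havg_sub F φ hFS hφS, ← havg_sub φ (fun _ => φ x) hφS (integrable_const _), hconst]
      abel
    rw [e]
    refine (enorm_add_le _ _).trans (add_le_add_right ((enorm_add_le _ _).trans ?_) _)
    rw [enorm_sub_rev (φ x)]
    exact add_le_add_left hφx _
  calc ∫⁻ x in S, ‖(⨍ y in S, F y ∂μ) - F x‖ₑ ∂μ
      ≤ ∫⁻ x in S, (‖⨍ y in S, (F y - φ y) ∂μ‖ₑ + (ε + ‖F x - φ x‖ₑ)) ∂μ :=
        setLIntegral_mono' hS hpt
    _ = ‖⨍ y in S, (F y - φ y) ∂μ‖ₑ * μ S + (ε * μ S + J) := by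
        rw [lintegral_add_left measurable_const, lintegral_add_left measurable_const,
          setLIntegral_const, setLIntegral_const]
    _ ≤ J + (ε * μ S + J) := by
        refine add_le_add_left ?_ _
        rw [mul_comm]; exact avg_enorm _
    _ = 2 * J + ε * μ S := by ring

/-- The averages over uniform partitions converge in `L¹`: averaging contracts `L¹`, and it
converges uniformly on the dense set of continuous functions with compact support. -/
lemma cellAvg_tendsto {E : Type*} [NormedAddCommGroup E] [NormedSpace ℝ E] [CompleteSpace E]
    {μ : Measure ℝ} [IsFiniteMeasure μ] (hμ : μ (Icc 0 1)ᶜ = 0)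
    {F : ℝ → E} (hF : Integrable F μ) :
    Tendsto (fun n => eLpNorm (cellAvg μ F n - F) 1 μ) atTop (𝓝 0) := by
  have hres : μ.restrict (Icc 0 1) = μ := Measure.restrict_eq_self_of_ae_mem (by
    rw [ae_iff]; exact hμ)
  rw [ENNReal.tendsto_nhds_zero]
  intro δ hδ
  obtain ⟨ε, hε0, hε⟩ : ∃ ε : ℝ≥0∞, 0 < ε ∧ 2 * ε + ε * μ univ ≤ δ := by
    have hc : Tendsto (fun ε : ℝ≥0∞ => 2 * ε + ε * μ univ) (𝓝[>] 0) (𝓝 0) := by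
      have hm : Continuous fun ε : ℝ≥0∞ => 2 * ε + ε * μ univ :=
        (ENNReal.continuous_const_mul (by simp)).add
          (ENNReal.continuous_mul_const (measure_ne_top _ _))
      have := hm.tendsto 0
      simp only [mul_zero, zero_mul, add_zero] at this
      exact this.mono_left nhdsWithin_le_nhds
    obtain ⟨ε, h1, h2⟩ := ((hc.eventually (ge_mem_nhds hδ)).and self_mem_nhdsWithin).exists
    exact ⟨ε, h2, h1⟩
  obtain ⟨φ, hsupp, hφ, hcont, hφi⟩ := hF.exists_hasCompactSupport_lintegral_sub_le hε0.ne'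
  have huc := hsupp.uniformContinuous_of_continuous hcont
  rw [EMetric.uniformContinuous_iff] at huc
  obtain ⟨η, hη, hηφ⟩ := huc ε hε0
  have hmesh : ∀ᶠ n : ℕ in atTop, ENNReal.ofReal (1 / ((n : ℝ) + 1)) < η := by
    have : Tendsto (fun n : ℕ => ENNReal.ofReal (1 / ((n : ℝ) + 1))) atTop (𝓝 0) := by
      simpa using ENNReal.tendsto_ofReal tendsto_one_div_add_atTop_nhds_zero_nat
    exact this.eventually (gt_mem_nhds hη)
  filter_upwards [hmesh] with n hn
  refine le_trans ?_ hε
  rw [eLpNorm_one_eq_lintegral_enorm]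
  have hcell : ∀ i ∈ Finset.range (n + 1), ∫⁻ x in unifCell n i, ‖(cellAvg μ F n - F) x‖ₑ ∂μ
      ≤ 2 * (∫⁻ x in unifCell n i, ‖F x - φ x‖ₑ ∂μ) + ε * ∫⁻ _x in unifCell n i, 1 ∂μ := by
    intro i hi
    rw [setLIntegral_congr_fun (unifCell_measurable n i)
      (g := fun x => ‖(⨍ y in unifCell n i, F y ∂μ) - F x‖ₑ)
      (fun x hx => by simp only [Pi.sub_apply]; rw [cellAvg_eq μ F hi hx])]
    rw [setLIntegral_one]
    refine lintegral_average_sub_le (unifCell_measurable n i) hF hφi fun x hx y hy => ?_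
    rw [← edist_eq_enorm_sub]
    refine (hηφ (lt_of_le_of_lt ?_ hn)).le
    rw [edist_dist]
    exact ENNReal.ofReal_le_ofReal (unifCell_dist hx hy)
  calc ∫⁻ x, ‖(cellAvg μ F n - F) x‖ₑ ∂μ
      = ∑ i ∈ Finset.range (n + 1), ∫⁻ x in unifCell n i, ‖(cellAvg μ F n - F) x‖ₑ ∂μ := by
        rw [lintegral_unifCell, hres]
    _ ≤ _ := Finset.sum_le_sum hcell
    _ = 2 * (∫⁻ x, ‖F x - φ x‖ₑ ∂μ) + ε * μ univ := by
        rw [Finset.sum_add_distrib, ← Finset.mul_sum, ← Finset.mul_sum, lintegral_unifCell,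
          lintegral_unifCell, hres, lintegral_one]
    _ ≤ 2 * ε + ε * μ univ := by gcongr

/-! ### The supremum over partitions as an integral -/

/-- By Jensen, every partition sum is at most the integral. -/
lemma sum_persp_le (D : Set ℝ) (K : ℝ → ℝ) {μ : Measure ℝ} {F : ℝ → ℝ × ℝ}
    (hF : Integrable F μ) {k : ℕ} {t : Fin (k + 1) → ℝ} (ht : StrictMono t) (h0 : t 0 = 0) :
    ∑ i : Fin k, persp D K (∫ x in initSeg (t i.succ) \ initSeg (t i.castSucc), F x ∂μ)
      ≤ ∫⁻ x, persp D K (F x) ∂μ := by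
  set C : ℕ → Set ℝ := fun n => initSeg (t ⟨min n k, by omega⟩) with hC
  have hmono : Monotone C := by
    intro a b hab
    refine initSeg_mono ?_ (ht.monotone ?_)
    · rw [← h0]; exact ht.monotone (Fin.zero_le _)
    · simp only [Fin.mk_le_mk]; omega
  have hC0 : C 0 = ∅ := by
    have : (⟨min 0 k, by omega⟩ : Fin (k + 1)) = 0 := by ext; simp
    simp only [hC, this, h0, initSeg, if_true]
  have htel := lintegral_telescope μ (fun x => persp D K (F x)) hmono
    (fun _ => initSeg_measurable _) hC0 k
  rw [Finset.sum_range] at htel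
  refine le_trans ?_ (htel.le.trans (setLIntegral_le_lintegral _ _))
  refine Finset.sum_le_sum fun i _ => ?_
  have e1 : C (i + 1) = initSeg (t i.succ) := by
    simp only [hC]; congr 2; ext; simp
  have e2 : C i = initSeg (t i.castSucc) := by
    simp only [hC]; congr 2; ext; simp [i.2.le]
  rw [e1, e2]
  exact persp_integral_le D K hF.restrict

/-- By Fatou and lower semicontinuity, the integral is at most the supremum of the sums over
uniform partitions. -/
lemma lintegral_persp_le (D : Set ℝ) (K : ℝ → ℝ) {μ : Measure ℝ} [IsFiniteMeasure μ]
    (hμ : μ (Icc 0 1)ᶜ = 0) {F : ℝ → ℝ × ℝ} (hF : Integrable F μ) {M : ℝ≥0∞}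
    (hM : ∀ n : ℕ, ∑ i ∈ Finset.range (n + 1), persp D K (∫ x in unifCell n i, F x ∂μ) ≤ M) :
    ∫⁻ x, persp D K (F x) ∂μ ≤ M := by
  have hlsc := persp_lowerSemicontinuous D K
  have hint : ∀ n, ∫⁻ x, persp D K (cellAvg μ F n x) ∂μ ≤ M := by
    intro n
    refine le_trans (le_of_eq ?_) (hM n)
    rw [← setLIntegral_univ, ← setLIntegral_congr (ae_eq_univ.2 hμ), ← lintegral_unifCell]
    refine Finset.sum_congr rfl fun i hi => ?_
    rw [setLIntegral_congr_fun (unifCell_measurable n i)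
      (g := fun _ => persp D K (⨍ y in unifCell n i, F y ∂μ))
      (fun x hx => by simp only; rw [cellAvg_eq μ F hi hx]),
      setLIntegral_const, mul_comm, ← measure_mul_persp_average, Measure.restrict_apply_univ]
  have hmeas : TendstoInMeasure μ (cellAvg μ F) atTop F :=
    tendstoInMeasure_of_tendsto_eLpNorm one_ne_zero
      (fun n => (cellAvg_stronglyMeasurable μ F n).aestronglyMeasurable)
      hF.aestronglyMeasurable (cellAvg_tendsto hμ hF)
  obtain ⟨ns, -, hns⟩ := hmeas.exists_seq_tendsto_ae
  calc ∫⁻ x, persp D K (F x) ∂μ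
      ≤ ∫⁻ x, liminf (fun j => persp D K (cellAvg μ F (ns j) x)) atTop ∂μ := by
        refine lintegral_mono_ae (hns.mono fun x hx => ?_)
        refine (hlsc.le_liminf (F x)).trans ?_
        exact liminf_le_liminf_of_le hx
    _ ≤ liminf (fun j => ∫⁻ x, persp D K (cellAvg μ F (ns j) x) ∂μ) atTop :=
        lintegral_liminf_le fun j =>
          hlsc.measurable.comp (cellAvg_stronglyMeasurable μ F (ns j)).measurable
    _ ≤ M := liminf_le_of_frequently_le' (Eventually.of_forall fun j => hint (ns j)).frequently

/-- Homogeneity turns a term of a partition sum of `I_D` into `persp D K` at the integral of the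
vector density over the cell. -/
lemma term_eq (D : Set ℝ) (K : ℝ → ℝ) {μ : Measure ℝ} {F : ℝ → ℝ × ℝ} (hF : Integrable F μ)
    {h : ℝ → ℝ} (hh : ∀ t ∈ Icc (0:ℝ) 1, ∫ x in initSeg t, F x ∂μ = (zeroAt0 h t, t))
    {s t : ℝ} (hs : 0 ≤ s) (hst : s < t) (ht : t ≤ 1) :
    ENNReal.ofReal (t - s) * persp D K ((t - s)⁻¹ • (zeroAt0 h t - zeroAt0 h s), 1)
      = persp D K (∫ x in initSeg t \ initSeg s, F x ∂μ) := by
  have hpos : 0 < t - s := sub_pos.2 hst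
  rw [setIntegral_sdiff (initSeg_measurable s) hF.integrableOn (initSeg_mono hs hst.le),
    hh t ⟨hs.trans hst.le, ht⟩, hh s ⟨hs, hst.le.trans ht⟩, ← persp_smul _ _ hpos.le]
  congr 1
  ext
  · simp only [Prod.smul_fst, Prod.fst_sub, smul_eq_mul]
    field_simp
  · simp

/-- The common value of `I_D` and the integral formula, expressed through the vector density
`F = (dμ_h/dμ, dt/dμ)` with respect to a measure `μ` dominating both `μ_h` and `dt`. -/
lemma ID_eq_lintegral_persp (D : Set ℝ) (K : ℝ → ℝ) {μ : Measure ℝ} [IsFiniteMeasure μ]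
    (hμ : μ (Icc 0 1)ᶜ = 0) {F : ℝ → ℝ × ℝ} (hF : Integrable F μ)
    {h : ℝ → ℝ} (hh : ∀ t ∈ Icc (0:ℝ) 1, ∫ x in initSeg t, F x ∂μ = (zeroAt0 h t, t)) :
    ID (fun v => persp D K (v, 1)) h = ∫⁻ x, persp D K (F x) ∂μ := by
  have hterm : ∀ {k : ℕ} {t : Fin (k + 1) → ℝ}, StrictMono t → t 0 = 0 → t (Fin.last k) = 1 →
      ∑ i : Fin k, ENNReal.ofReal (t i.succ - t i.castSucc) * persp D K
        ((t i.succ - t i.castSucc)⁻¹ • (zeroAt0 h (t i.succ) - zeroAt0 h (t i.castSucc)), 1)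
      = ∑ i : Fin k,
        persp D K (∫ x in initSeg (t i.succ) \ initSeg (t i.castSucc), F x ∂μ) := by
    intro k t ht h0 h1
    refine Finset.sum_congr rfl fun i _ => term_eq D K hF hh ?_ ?_ ?_
    · rw [← h0]; exact ht.monotone (Fin.zero_le _)
    · exact ht i.castSucc_lt_succ
    · rw [← h1]; exact ht.monotone (Fin.le_last _)
  apply le_antisymm
  · refine iSup_le fun k => iSup_le fun t => iSup_le fun ht => iSup_le fun h0 =>
      iSup_le fun h1 => ?_
    rw [hterm ht h0 h1]
    exact sum_persp_le D K hF ht h0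
  · refine lintegral_persp_le D K hμ hF fun n => ?_
    set t : Fin (n + 1 + 1) → ℝ := fun i => (i : ℕ) / ((n : ℝ) + 1) with ht_def
    have ht : StrictMono t := by
      intro i j hij
      have : ((i : ℕ) : ℝ) < ((j : ℕ) : ℝ) := by exact_mod_cast hij
      simp only [ht_def]; gcongr
    have h0 : t 0 = 0 := by simp [ht_def]
    have h1 : t (Fin.last (n + 1)) = 1 := by
      simp only [ht_def, Fin.val_last]; push_cast; field_simp
    refine le_trans (le_of_eq ?_) (le_iSup_of_le (n + 1) (le_iSup_of_le t (le_iSup_of_le ht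
      (le_iSup_of_le h0 (le_iSup_of_le h1 le_rfl)))))
    rw [hterm ht h0 h1, Finset.sum_range]
    rfl

/-- Integral representation of the rate function `I_D` in dimension one: if
`μ_h = ρ·dt + μ_s⁺ − μ_s⁻` is the Lebesgue–Jordan decomposition of the measure with
distribution function `h`, then
`I_D(h) = ∫₀¹ I(ρ(t)) dt + I_∞(1)·μ_s⁺([0,1]) + I_∞(−1)·μ_s⁻([0,1])`. -/
theorem ID_integral_representation_dim_one
    {Ω : Type*} [MeasurableSpace Ω] (P : Measure Ω) [IsProbabilityMeasure P]
    (X1 : Ω → ℝ) (hX1 : Measurable X1)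
    (hCramer : (0:ℝ) ∈ interior (lapDom1 P X1))
    (h : ℝ → ℝ) (hBV : h ∈ BVset ℝ)
    (ρ : ℝ → ℝ) (hρ : IntegrableOn ρ (Icc (0:ℝ) 1))
    (μsp μsm : Measure ℝ) [IsFiniteMeasure μsp] [IsFiniteMeasure μsm]
    (hsp : μsp (Icc (0:ℝ) 1)ᶜ = 0) (hsm : μsm (Icc (0:ℝ) 1)ᶜ = 0)
    (hsingp : Measure.MutuallySingular μsp MeasureTheory.volume)
    (hsingm : Measure.MutuallySingular μsm MeasureTheory.volume)
    (hjordan : Measure.MutuallySingular μsp μsm)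
    (hdecomp : ∀ t ∈ Icc (0:ℝ) 1,
      h t = (∫ s in Icc (0:ℝ) t, ρ s) + (μsp (Icc 0 t)).toReal - (μsm (Icc 0 t)).toReal) :
    ID (rateI1 P X1) h =
      (∫⁻ t in Icc (0:ℝ) 1, rateI1 P X1 (ρ t)) +
        IinfP P X1 * μsp (Icc (0:ℝ) 1) + IinfM P X1 * μsm (Icc (0:ℝ) 1) := by
  set D := lapDom1 P X1
  set K := cgfK1 P X1
  have hI : rateI1 P X1 = fun v => persp D K (v, 1) := by
    funext v; simp [rateI1, persp, D, K]
  have hIP : IinfP P X1 = persp D K (1, 0) := by simp [IinfP, persp, D]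
  have hIM : IinfM P X1 = persp D K (-1, 0) := by simp [IinfM, persp, D]
  -- `s1ᶜ ∩ s3ᶜ` carries `μsp` and `s2ᶜ ∩ s3` carries `μsm`; each is null for the other two
  -- measures, so `F` below has the prescribed value almost everywhere for each of the three
  obtain ⟨s1, hs1, hs1p, hs1v⟩ := hsingp
  obtain ⟨s2, hs2, hs2m, hs2v⟩ := hsingm
  obtain ⟨s3, hs3, hs3p, hs3m⟩ := hjordan
  set vol1 : Measure ℝ := volume.restrict (Icc (0:ℝ) 1) with hvol1
  classical
  set F : ℝ → ℝ × ℝ := fun x =>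
    if x ∈ s1ᶜ ∩ s3ᶜ then (1, 0) else if x ∈ s2ᶜ ∩ s3 then (-1, 0) else (ρ x, 1) with hFdef
  have hFv : F =ᵐ[vol1] fun x => (ρ x, 1) := by
    have h1 : ∀ᵐ x ∂(volume : Measure ℝ), x ∉ s1ᶜ := measure_eq_zero_iff_ae_notMem.1 hs1v
    have h2 : ∀ᵐ x ∂(volume : Measure ℝ), x ∉ s2ᶜ := measure_eq_zero_iff_ae_notMem.1 hs2v
    filter_upwards [ae_restrict_of_ae h1, ae_restrict_of_ae h2] with x h1 h2
    simp only [hFdef]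
    rw [if_neg fun h => h1 h.1, if_neg fun h => h2 h.1]
  have hFp : F =ᵐ[μsp] fun _ => (1, 0) := by
    filter_upwards [measure_eq_zero_iff_ae_notMem.1 hs1p, measure_eq_zero_iff_ae_notMem.1 hs3p]
      with x h1 h3
    simp only [hFdef]
    rw [if_pos ⟨h1, h3⟩]
  have hFm : F =ᵐ[μsm] fun _ => (-1, 0) := by
    filter_upwards [measure_eq_zero_iff_ae_notMem.1 hs2m, measure_eq_zero_iff_ae_notMem.1 hs3m]
      with x h2 h3
    simp only [hFdef]
    rw [if_neg fun h => h3 h.2, if_pos ⟨h2, not_not.1 h3⟩]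
  have hFvi : Integrable F vol1 :=
    (Integrable.prodMk hρ (integrable_const (1:ℝ))).congr hFv.symm
  have hFpi : Integrable F μsp := (integrable_const _).congr hFp.symm
  have hFmi : Integrable F μsm := (integrable_const _).congr hFm.symm
  have hF : Integrable F (vol1 + μsp + μsm) := (hFvi.add_measure hFpi).add_measure hFmi
  have hμ : (vol1 + μsp + μsm) (Icc 0 1)ᶜ = 0 := by
    simp [Measure.add_apply, hsp, hsm, hvol1, Measure.restrict_apply]
  have hh : ∀ t ∈ Icc (0:ℝ) 1,
      ∫ x in initSeg t, F x ∂(vol1 + μsp + μsm) = (zeroAt0 h t, t) := by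
    intro t ht
    by_cases h0 : t = 0
    · simp [initSeg, zeroAt0, h0, Prod.ext_iff]
    rw [initSeg, if_neg h0, zeroAt0, if_neg h0, hdecomp t ht, Measure.restrict_add,
      Measure.restrict_add,
      integral_add_measure (hFvi.restrict.add_measure hFpi.restrict) hFmi.restrict,
      integral_add_measure hFvi.restrict hFpi.restrict,
      integral_congr_ae (ae_restrict_of_ae hFv), integral_congr_ae (ae_restrict_of_ae hFp),
      integral_congr_ae (ae_restrict_of_ae hFm), hvol1,
      Measure.restrict_restrict measurableSet_Icc,
      inter_eq_self_of_subset_left (Icc_subset_Icc_right ht.2),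
      setIntegral_const, setIntegral_const]
    have hρt : IntegrableOn ρ (Icc 0 t) := hρ.mono_set (Icc_subset_Icc_right ht.2)
    rw [integral_pair hρt (integrable_const (1:ℝ))]
    ext
    · simp [measureReal_def]; ring
    · simp [measureReal_def, ht.1]
  have hpu : μsp univ = μsp (Icc 0 1) := (measure_of_measure_compl_eq_zero hsp).symm
  have hmu : μsm univ = μsm (Icc 0 1) := (measure_of_measure_compl_eq_zero hsm).symm
  rw [hI, hIP, hIM, ID_eq_lintegral_persp D K hμ hF hh, lintegral_add_measure,
    lintegral_add_measure,
    lintegral_congr_ae (hFv.mono fun x hx => congrArg (persp D K) hx),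
    lintegral_congr_ae (hFp.mono fun x hx => congrArg (persp D K) hx),
    lintegral_congr_ae (hFm.mono fun x hx => congrArg (persp D K) hx), lintegral_const,
    lintegral_const, hpu, hmu]
end
end

section
/- Fix a vector ℓ ∈ ℝ^d. The maximum functional h ↦ sup_{t ∈ [0,1]} h(t)·ℓ is lower semicontinuous on the metric space (BV([0,1];ℝ^d), ρ_*): if h, h₁, h₂, … ∈ BV[0,1] and ρ_*(h_n, h) → 0 as n → ∞, then sup_{t ∈ [0,1]} h(t)·ℓ ≤ liminf_{n→∞} sup_{t ∈ [0,1]} h_n(t)·ℓ. -/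
/-!
It suffices to show that every real `c < sup h·ℓ` satisfies `c ≤ sup hₙ·ℓ` for all large `n`.
Choose `t` with `c < h(t)·ℓ`. If `t = 1`, then `hₙ(1) → h(1)` because `ρ_*` controls the value
at `1`. If `t < 1`, right-continuity gives `c' > c` and an interval `(t, u] ⊆ [0,1]` on which
`h·ℓ > c'`; should `hₙ·ℓ ≤ c` hold throughout `[0,1]`, then
`‖hₙ - h‖ ‖ℓ‖ ≥ c' - c` on `(t, u]`, so that `ρ_*(hₙ, h) ‖ℓ‖ ≥ (u - t)(c' - c) > 0`, which fails
for large `n`. Bounded variation enters twice: it makes `‖hₙ - h‖` integrable, so that the integral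
in `ρ_*` is not the default value `0`, and it makes `hₙ·ℓ` bounded above, so that the real supremum
is a genuine one.
-/

open Set Filter Topology MeasureTheory
open scoped RealInnerProductSpace ENNReal

noncomputable section

/-- Each coordinate is a difference of two monotone functions, hence integrable. -/
lemma BVset_integrableOn {d : ℕ} {h : ℝ → EuclideanSpace ℝ (Fin d)}
    (hh : h ∈ BVset (EuclideanSpace ℝ (Fin d))) : IntegrableOn h (Icc (0:ℝ) 1) := by
  have hbv : LocallyBoundedVariationOn h (Icc (0:ℝ) 1) :=
    BoundedVariationOn.locallyBoundedVariationOn hh.2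
  refine integrable_piLp_iff.2 fun i => ?_
  have hlip := (EuclideanSpace.proj i : EuclideanSpace ℝ (Fin d) →L[ℝ] ℝ).lipschitz
  obtain ⟨p, q, hp, hq, hpq⟩ :=
    (hlip.comp_locallyBoundedVariationOn hbv).exists_monotoneOn_sub_monotoneOn
  have hi : (fun x => h x i) = p - q := hpq
  rw [hi]
  exact (hp.integrableOn_isCompact isCompact_Icc).sub (hq.integrableOn_isCompact isCompact_Icc)

lemma BVset_inner_bddAbove {d : ℕ} {h : ℝ → EuclideanSpace ℝ (Fin d)}
    (hh : h ∈ BVset (EuclideanSpace ℝ (Fin d))) (l : EuclideanSpace ℝ (Fin d)) :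
    BddAbove (range fun t : Icc (0:ℝ) 1 => (⟪h t.1, l⟫ : ℝ)) := by
  have hbv : BoundedVariationOn h (Icc (0:ℝ) 1) := hh.2
  refine ⟨((eVariationOn h (Icc (0:ℝ) 1)).toReal + ‖h 0‖) * ‖l‖, ?_⟩
  rintro _ ⟨t, rfl⟩
  have h1 : dist (h t.1) (h 0) ≤ _ := hbv.dist_le t.2 (by simp : (0:ℝ) ∈ Icc (0:ℝ) 1)
  have h2 : ‖h t.1‖ ≤ ‖h t.1 - h 0‖ + ‖h 0‖ := norm_le_norm_sub_add _ _
  rw [dist_eq_norm] at h1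
  exact (real_inner_le_norm _ _).trans (by gcongr; linarith)

/-- Vectors separated by a gap in direction `ℓ` are far apart; no `ℓ ≠ 0` is needed in this form. -/
lemma sub_le_norm_sub_mul_norm {E : Type*} [NormedAddCommGroup E] [InnerProductSpace ℝ E]
    {g k l : E} {c c' : ℝ} (hk : (⟪k, l⟫ : ℝ) ≤ c) (hg : c' ≤ (⟪g, l⟫ : ℝ)) :
    c' - c ≤ ‖k - g‖ * ‖l‖ := by
  have h1 := real_inner_le_norm (g - k) l
  rw [inner_sub_left, norm_sub_rev] at h1
  linarith

/-- Lower semicontinuity at a single level `c`, in contrapositive form: if `h·ℓ` exceeds `c`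
somewhere, then every `k` with `k·ℓ ≤ c` throughout `[0,1]` stays a fixed `ρ_*`-distance from `h`.
Multiplying by `‖ℓ‖` avoids dividing by it. -/
lemma exists_rhoStar_mul_norm_ge {d : ℕ} {l : EuclideanSpace ℝ (Fin d)}
    {h : ℝ → EuclideanSpace ℝ (Fin d)} (hh : h ∈ BVset (EuclideanSpace ℝ (Fin d)))
    {c t : ℝ} (ht : t ∈ Icc (0:ℝ) 1) (hc : c < (⟪h t, l⟫ : ℝ)) :
    ∃ ε > 0, ∀ k ∈ BVset (EuclideanSpace ℝ (Fin d)),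
      (∀ s ∈ Icc (0:ℝ) 1, (⟪k s, l⟫ : ℝ) ≤ c) → ε ≤ rhoStar k h * ‖l‖ := by
  rcases ht.2.eq_or_lt with rfl | ht1
  · refine ⟨_, sub_pos.2 hc, fun k _ hkc => ?_⟩
    refine (sub_le_norm_sub_mul_norm (hkc 1 ht) le_rfl).trans ?_
    gcongr
    exact le_add_of_nonneg_left (integral_nonneg fun _ => norm_nonneg _)
  · obtain ⟨c', hcc', hc'⟩ := exists_between hc
    have hlim : Tendsto (fun s => (⟪h s, l⟫ : ℝ)) (𝓝[>] t) (𝓝 ⟪h t, l⟫) :=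
      (hh.1.1 t ⟨ht.1, ht1⟩).inner tendsto_const_nhds
    obtain ⟨u, hu, hut⟩ := mem_nhdsGT_iff_exists_Ioc_subset.1
      (inter_mem (hlim.eventually (lt_mem_nhds hc')) (Ioc_mem_nhdsGT ht1))
    have htu : t < u := hu
    have hsub : Ioc t u ⊆ Icc (0:ℝ) 1 := fun s hs =>
      ⟨ht.1.trans hs.1.le, (hut hs).2.2⟩
    refine ⟨(u - t) * (c' - c), mul_pos (sub_pos.2 htu) (sub_pos.2 hcc'), fun k hk hkc => ?_⟩
    have hint : IntegrableOn (fun s => ‖k s - h s‖ * ‖l‖) (Icc (0:ℝ) 1) :=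
      (((BVset_integrableOn hk).sub (BVset_integrableOn hh)).norm).mul_const _
    calc (u - t) * (c' - c) = ∫ _ in Ioc t u, (c' - c) := by
          simp [htu.le]
      _ ≤ ∫ s in Ioc t u, ‖k s - h s‖ * ‖l‖ := by
          refine setIntegral_mono_on (by simp) (hint.mono_set hsub) measurableSet_Ioc
            fun s hs => sub_le_norm_sub_mul_norm (hkc s (hsub hs)) (hut hs).1.le
      _ ≤ ∫ s in Icc (0:ℝ) 1, ‖k s - h s‖ * ‖l‖ :=
          setIntegral_mono_set hint (ae_of_all _ fun s => by positivity) hsub.eventuallyLE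
      _ = (∫ s in Icc (0:ℝ) 1, ‖k s - h s‖) * ‖l‖ := integral_mul_const _ _
      _ ≤ rhoStar k h * ‖l‖ := by
          gcongr
          exact le_add_of_nonneg_right (norm_nonneg _)

/-- For a fixed direction `ℓ`, the maximum functional `h ↦ sup_{t ∈ [0,1]} h(t)·ℓ` is lower
semicontinuous on `(BV[0,1], ρ_*)`. -/
theorem max_functional_lsc_rhoStar
    {d : ℕ} (l : EuclideanSpace ℝ (Fin d))
    (h : ℝ → EuclideanSpace ℝ (Fin d)) (hh : h ∈ BVset (EuclideanSpace ℝ (Fin d)))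
    (hs : ℕ → ℝ → EuclideanSpace ℝ (Fin d))
    (hhs : ∀ n, hs n ∈ BVset (EuclideanSpace ℝ (Fin d)))
    (hconv : Tendsto (fun n => rhoStar (hs n) h) atTop (nhds 0)) :
    ((⨆ t : Icc (0:ℝ) 1, ⟪h t.1, l⟫ : ℝ) : EReal) ≤
      liminf (fun n => ((⨆ t : Icc (0:ℝ) 1, ⟪hs n t.1, l⟫ : ℝ) : EReal)) atTop := by
  refine EReal.ge_of_forall_gt_iff_ge.1 fun c hc => ?_
  obtain ⟨t, ht⟩ := exists_lt_of_lt_ciSup (EReal.coe_lt_coe_iff.1 hc)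
  obtain ⟨ε, hε, hfar⟩ := exists_rhoStar_mul_norm_ge hh t.2 ht
  have hlim : Tendsto (fun n => rhoStar (hs n) h * ‖l‖) atTop (𝓝 0) := by
    simpa using hconv.mul_const ‖l‖
  refine le_liminf_of_le (by isBoundedDefault) ?_
  filter_upwards [hlim.eventually (gt_mem_nhds hε)] with n hn
  refine EReal.coe_le_coe_iff.2 ?_
  by_contra! hlt
  exact hn.not_ge (hfar (hs n) (hhs n) fun s hs' =>
    (le_ciSup (BVset_inner_bddAbove (hhs n) l) ⟨s, hs'⟩).trans hlt.le)
end
end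

section
/- Explicit formula for the kernel-weighted rate function: assume the Cramér moment assumption 0 ∈ interior(D_L) and let f : [0,1] → ℝ be a Lipschitz function not identically zero. Let λ ∈ ℝ^d be such that f(t)λ ∈ interior(D_L) for every t ∈ [0,1], and set x := ∫₀¹ f(t)·∇K(f(t)λ) dt (that is, x = ∇E_f(λ)), where ∇K denotes the gradient of K, which exists on interior(D_L). Then I_f(x) = ∫₀¹ I(∇K(f(t)λ)) dt. -/
/-! Write `K = log L`. The transform `L` is differentiable in the interior of its domain, with
derivative `v ↦ E[⟨X₁, v⟩ exp⟨u, X₁⟩]` depending continuously on `u`: near an interior point the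
integrand `‖X₁‖ exp⟨w, X₁⟩` is dominated, uniformly in `w`, by a multiple of a finite sum of
`exp⟨v, X₁⟩` over the vertices `v` of a polytope in the domain (`exists_dominating`). So `K` is
`C¹` there (`hasFDerivAt_cgfK`, `continuousAt_fderiv_cgfK`).

The other ingredient is the gradient inequality `K(w) ≥ K(u) + ⟨w - u, ∇K(u)⟩` for `u` interior and
`w` in the domain (`cgfK_tangent`), which is Jensen's inequality for the exponentially tilted
measure. It shows that the supremum defining `I(∇K(u))` is attained at `u` (`rateI_gradient`).
Applied at `u = f(t)λ`, `w = f(t)μ` and integrated over `t`, it shows likewise that the supremum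
defining `I_f(∇E_f(λ))` is attained at `λ`. Both sides of the formula then equal
`∫₀¹ (⟨f(t)λ, ∇K(f(t)λ)⟩ - K(f(t)λ)) dt`; the integrals converge because the integrands are
continuous on `[0,1]`. -/

open Set Filter Topology MeasureTheory
open scoped RealInnerProductSpace ENNReal

noncomputable section

/-- The effective domain of `E_f(λ) = ∫₀¹ K(f(t)λ) dt`. -/
def EfDom {d : ℕ} {Ω : Type*} [MeasurableSpace Ω] (P : Measure Ω)
    (X1 : Ω → EuclideanSpace ℝ (Fin d)) (f : ℝ → ℝ) : Set (EuclideanSpace ℝ (Fin d)) :=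
  {l | (∀ᵐ t ∂(MeasureTheory.volume.restrict (Icc (0:ℝ) 1)), lap P X1 (f t • l) ≠ ⊤) ∧
    IntegrableOn (fun t => cgfK P X1 (f t • l)) (Icc (0:ℝ) 1)}

/-- The rate function `I_f = (E_f)^*`. -/
def rateIf {d : ℕ} {Ω : Type*} [MeasurableSpace Ω] (P : Measure Ω)
    (X1 : Ω → EuclideanSpace ℝ (Fin d)) (f : ℝ → ℝ) (x : EuclideanSpace ℝ (Fin d)) : ℝ≥0∞ :=
  ⨆ l ∈ EfDom P X1 f,
    ENNReal.ofReal (⟪l, x⟫ - ∫ t in Icc (0:ℝ) 1, cgfK P X1 (f t • l))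

section Helpers

variable {d : ℕ} {Ω : Type*} [MeasurableSpace Ω] {P : Measure Ω}
  {X1 : Ω → EuclideanSpace ℝ (Fin d)}

/-! ### Integrability and local domination of the exponentials -/

lemma measurable_exp_inner (hX1 : Measurable X1) (u : EuclideanSpace ℝ (Fin d)) :
    Measurable fun ω => Real.exp ⟪u, X1 ω⟫ := by
  fun_prop

lemma integrable_of_mem_lapDom (hX1 : Measurable X1) {u : EuclideanSpace ℝ (Fin d)}
    (hu : u ∈ lapDom P X1) : Integrable (fun ω => Real.exp ⟪u, X1 ω⟫) P := by
  refine ⟨(measurable_exp_inner hX1 u).aestronglyMeasurable, ?_⟩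
  rw [hasFiniteIntegral_iff_ofReal (Eventually.of_forall fun ω => (Real.exp_pos _).le)]
  exact lt_top_iff_ne_top.2 hu

lemma cgfK_eq (hX1 : Measurable X1) (u : EuclideanSpace ℝ (Fin d)) :
    cgfK P X1 u = Real.log (∫ ω, Real.exp ⟪u, X1 ω⟫ ∂P) := by
  rw [cgfK, lap, integral_eq_lintegral_of_nonneg_ae
    (Eventually.of_forall fun ω => (Real.exp_pos _).le)
    (measurable_exp_inner hX1 u).aestronglyMeasurable]

lemma lap_pos [IsProbabilityMeasure P] (hX1 : Measurable X1) {u : EuclideanSpace ℝ (Fin d)}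
    (hu : u ∈ lapDom P X1) : 0 < ∫ ω, Real.exp ⟪u, X1 ω⟫ ∂P :=
  integral_exp_pos (integrable_of_mem_lapDom hX1 hu)

/-- The local domination behind differentiation under the expectation: the maximum of the convex
function `exp⟨·, x⟩` over a polytope is attained at a vertex, and moving from `w` a little in the
direction of `x` gains a factor `exp(δ‖x‖) ≥ δ‖x‖`. -/
lemma exists_dominating (hX1 : Measurable X1) {u : EuclideanSpace ℝ (Fin d)}
    (hu : u ∈ interior (lapDom P X1)) :
    ∃ s ∈ 𝓝 u, ∃ B : Ω → ℝ, Integrable B P ∧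
      ∀ ω, ∀ w ∈ s, ‖X1 ω‖ * Real.exp ⟪w, X1 ω⟫ ≤ B ω := by
  obtain ⟨T, hT1, hT2⟩ :=
    (convex_singleton (𝕜 := ℝ) u).exists_subset_interior_convexHull_finset_of_isCompact
      isCompact_singleton (t := lapDom P X1)
      (by rw [nhdsSet_singleton]; exact mem_interior_iff_mem_nhds.1 hu)
  obtain ⟨r, hr, hball⟩ := Metric.isOpen_iff.1 isOpen_interior u (hT1 rfl)
  refine ⟨Metric.ball u (r / 2), Metric.ball_mem_nhds _ (by positivity),
    fun ω => (2 / r) * ∑ v ∈ T, Real.exp ⟪v, X1 ω⟫, ?_, ?_⟩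
  · refine (integrable_finsetSum _ fun v hv => ?_).const_mul _
    exact integrable_of_mem_lapDom hX1 (hT2 (subset_convexHull ℝ _ hv))
  · intro ω w hw
    set x := X1 ω
    set w' := w + (r / 2 * ‖x‖⁻¹) • x with hw'
    have hmem : w' ∈ convexHull ℝ (T : Set (EuclideanSpace ℝ (Fin d))) := by
      refine interior_subset (hball ?_)
      rw [Metric.mem_ball, dist_eq_norm] at hw ⊢
      have h1 : ‖(r / 2 * ‖x‖⁻¹) • x‖ ≤ r / 2 := by
        rw [norm_smul, Real.norm_of_nonneg (by positivity), mul_assoc]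
        exact mul_le_of_le_one_right (by positivity) inv_mul_le_one
      calc ‖w' - u‖ = ‖(w - u) + (r / 2 * ‖x‖⁻¹) • x‖ := by rw [hw']; congr 1; abel
        _ ≤ ‖w - u‖ + ‖(r / 2 * ‖x‖⁻¹) • x‖ := norm_add_le _ _
        _ < r := by linarith
    have hconv : ConvexOn ℝ univ fun v : EuclideanSpace ℝ (Fin d) => Real.exp ⟪v, x⟫ := by
      have h := convexOn_exp.comp_linearMap ((innerSL ℝ x).toLinearMap)
      simpa [Function.comp_def, real_inner_comm] using h
    obtain ⟨v, hv, hle⟩ := hconv.exists_ge_of_mem_convexHull (subset_univ _) hmem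
    have hsum : Real.exp ⟪v, x⟫ ≤ ∑ v ∈ T, Real.exp ⟪v, x⟫ :=
      Finset.single_le_sum (f := fun v => Real.exp ⟪v, x⟫)
        (fun _ _ => (Real.exp_pos _).le) hv
    have hinner : ⟪w', x⟫ = ⟪w, x⟫ + r / 2 * ‖x‖ := by
      rw [hw', inner_add_left, real_inner_smul_left, real_inner_self_eq_norm_sq]
      rcases eq_or_ne ‖x‖ 0 with h | h
      · simp [h]
      · field_simp
    have hexp : r / 2 * ‖x‖ * Real.exp ⟪w, x⟫ ≤ Real.exp ⟪w', x⟫ := by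
      rw [hinner, Real.exp_add, mul_comm]
      gcongr
      linarith [Real.add_one_le_exp (r / 2 * ‖x‖)]
    calc ‖x‖ * Real.exp ⟪w, x⟫ = 2 / r * (r / 2 * ‖x‖ * Real.exp ⟪w, x⟫) := by field_simp
      _ ≤ 2 / r * ∑ v ∈ T, Real.exp ⟪v, x⟫ := by
        gcongr
        exact hexp.trans (hle.trans hsum)

/-! ### Smoothness of the Laplace transform and of `K` -/

/-- The derivative of the Laplace transform at `u`, the functional `v ↦ E[⟨X₁, v⟩ exp⟨u, X₁⟩]`. -/
def lapDeriv (P : Measure Ω) (X1 : Ω → EuclideanSpace ℝ (Fin d)) (u : EuclideanSpace ℝ (Fin d)) :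
    EuclideanSpace ℝ (Fin d) →L[ℝ] ℝ :=
  ∫ ω, Real.exp ⟪u, X1 ω⟫ • innerSL ℝ (X1 ω) ∂P

lemma aestronglyMeasurable_lapDeriv (hX1 : Measurable X1) (u : EuclideanSpace ℝ (Fin d)) :
    AEStronglyMeasurable (fun ω => Real.exp ⟪u, X1 ω⟫ • innerSL ℝ (X1 ω)) P :=
  ((measurable_exp_inner hX1 u).smul
    ((innerSL ℝ).continuous.measurable.comp hX1)).aestronglyMeasurable

lemma norm_lapDeriv_integrand (u x : EuclideanSpace ℝ (Fin d)) :
    ‖Real.exp ⟪u, x⟫ • innerSL ℝ x‖ = ‖x‖ * Real.exp ⟪u, x⟫ := by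
  rw [norm_smul, innerSL_apply_norm, Real.norm_of_nonneg (Real.exp_pos _).le, mul_comm]

lemma integrable_lapDeriv (hX1 : Measurable X1) {u : EuclideanSpace ℝ (Fin d)}
    (hu : u ∈ interior (lapDom P X1)) :
    Integrable (fun ω => Real.exp ⟪u, X1 ω⟫ • innerSL ℝ (X1 ω)) P := by
  obtain ⟨s, hs, B, hB, hle⟩ := exists_dominating hX1 hu
  refine hB.mono' (aestronglyMeasurable_lapDeriv hX1 u) (Eventually.of_forall fun ω => ?_)
  rw [norm_lapDeriv_integrand]
  exact hle ω u (mem_of_mem_nhds hs)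

lemma hasFDerivAt_lap (hX1 : Measurable X1) {u : EuclideanSpace ℝ (Fin d)}
    (hu : u ∈ interior (lapDom P X1)) :
    HasFDerivAt (fun w => ∫ ω, Real.exp ⟪w, X1 ω⟫ ∂P) (lapDeriv P X1 u) u := by
  obtain ⟨s, hs, B, hB, hle⟩ := exists_dominating hX1 hu
  refine hasFDerivAt_integral_of_dominated_of_fderiv_le
    (F' := fun w ω => Real.exp ⟪w, X1 ω⟫ • innerSL ℝ (X1 ω)) hs
    (Eventually.of_forall fun w => (measurable_exp_inner hX1 w).aestronglyMeasurable)
    (integrable_of_mem_lapDom hX1 (interior_subset hu)) (aestronglyMeasurable_lapDeriv hX1 u)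
    (Eventually.of_forall fun ω w hw => ?_) hB (Eventually.of_forall fun ω w _ => ?_)
  · rw [norm_lapDeriv_integrand]
    exact hle ω w hw
  · have h : HasFDerivAt (fun w => ⟪w, X1 ω⟫) (innerSL ℝ (X1 ω)) w := by
      have h := (innerSL ℝ (X1 ω)).hasFDerivAt (x := w)
      simpa [real_inner_comm] using h
    exact h.exp

lemma continuousAt_lapDeriv (hX1 : Measurable X1) {u : EuclideanSpace ℝ (Fin d)}
    (hu : u ∈ interior (lapDom P X1)) : ContinuousAt (lapDeriv P X1) u := by
  obtain ⟨s, hs, B, hB, hle⟩ := exists_dominating hX1 hu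
  refine continuousAt_of_dominated
    (Eventually.of_forall fun w => aestronglyMeasurable_lapDeriv hX1 w)
    (Filter.eventually_of_mem hs fun w hw => Eventually.of_forall fun ω => ?_) hB
    (Eventually.of_forall fun ω => ?_)
  · rw [norm_lapDeriv_integrand]
    exact hle ω w hw
  · fun_prop

lemma hasFDerivAt_cgfK [IsProbabilityMeasure P] (hX1 : Measurable X1)
    {u : EuclideanSpace ℝ (Fin d)} (hu : u ∈ interior (lapDom P X1)) :
    HasFDerivAt (cgfK P X1) ((∫ ω, Real.exp ⟪u, X1 ω⟫ ∂P)⁻¹ • lapDeriv P X1 u) u := by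
  rw [funext (cgfK_eq (P := P) hX1)]
  exact (hasFDerivAt_lap hX1 hu).log (lap_pos hX1 (interior_subset hu)).ne'

lemma continuousAt_fderiv_cgfK [IsProbabilityMeasure P] (hX1 : Measurable X1)
    {u : EuclideanSpace ℝ (Fin d)} (hu : u ∈ interior (lapDom P X1)) :
    ContinuousAt (fderiv ℝ (cgfK P X1)) u := by
  have h : ContinuousAt
      (fun w => (∫ ω, Real.exp ⟪w, X1 ω⟫ ∂P)⁻¹ • lapDeriv P X1 w) u :=
    ((hasFDerivAt_lap hX1 hu).continuousAt.inv₀ (lap_pos hX1 (interior_subset hu)).ne').smul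
      (continuousAt_lapDeriv hX1 hu)
  refine h.congr ?_
  filter_upwards [isOpen_interior.mem_nhds hu] with w hw
  exact (hasFDerivAt_cgfK hX1 hw).fderiv.symm

lemma continuousAt_gradient_cgfK [IsProbabilityMeasure P] (hX1 : Measurable X1)
    {u : EuclideanSpace ℝ (Fin d)} (hu : u ∈ interior (lapDom P X1)) :
    ContinuousAt (gradient (cgfK P X1)) u :=
  (InnerProductSpace.toDual ℝ (EuclideanSpace ℝ (Fin d))).symm.continuous.continuousAt.comp
    (continuousAt_fderiv_cgfK hX1 hu)

/-- `∇K(u)` is the mean of `X₁` under the tilted measure `exp⟨u, X₁⟩ dP / L(u)`. -/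
lemma inner_gradient_cgfK [IsProbabilityMeasure P] (hX1 : Measurable X1)
    {u : EuclideanSpace ℝ (Fin d)} (hu : u ∈ interior (lapDom P X1))
    (v : EuclideanSpace ℝ (Fin d)) :
    ⟪v, gradient (cgfK P X1) u⟫ * (∫ ω, Real.exp ⟪u, X1 ω⟫ ∂P) =
      ∫ ω, Real.exp ⟪u, X1 ω⟫ * ⟪v, X1 ω⟫ ∂P := by
  have hpos := lap_pos hX1 (interior_subset hu)
  have h : (lapDeriv P X1 u) v = ∫ ω, Real.exp ⟪u, X1 ω⟫ * ⟪v, X1 ω⟫ ∂P := by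
    rw [lapDeriv, ContinuousLinearMap.integral_apply (integrable_lapDeriv hX1 hu)]
    simp [real_inner_comm]
  rw [real_inner_comm, gradient, InnerProductSpace.toDual_symm_apply,
    (hasFDerivAt_cgfK hX1 hu).fderiv, ← h]
  simp only [smul_apply, smul_eq_mul]
  field_simp

/-! ### The gradient inequality and its consequence for `I` -/

/-- The graph of `K` lies above its tangent hyperplanes. -/
lemma cgfK_tangent [IsProbabilityMeasure P] (hX1 : Measurable X1)
    {u w : EuclideanSpace ℝ (Fin d)} (hu : u ∈ interior (lapDom P X1)) (hw : w ∈ lapDom P X1) :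
    cgfK P X1 u + ⟪w - u, gradient (cgfK P X1) u⟫ ≤ cgfK P X1 w := by
  have hu' := interior_subset hu
  have hpos := lap_pos hX1 hu'
  have hm := inner_gradient_cgfK hX1 hu (w - u)
  set m := ⟪w - u, gradient (cgfK P X1) u⟫
  have hi0 := integrable_of_mem_lapDom hX1 hu'
  have hi1 : Integrable (fun ω => Real.exp ⟪u, X1 ω⟫ * ⟪w - u, X1 ω⟫) P := by
    have h := (integrable_lapDeriv hX1 hu).apply_continuousLinearMap (w - u)
    simpa [real_inner_comm] using h
  have hlower : Real.exp m * (∫ ω, Real.exp ⟪u, X1 ω⟫ ∂P) ≤ ∫ ω, Real.exp ⟪w, X1 ω⟫ ∂P := by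
    calc Real.exp m * (∫ ω, Real.exp ⟪u, X1 ω⟫ ∂P)
        = ∫ ω, Real.exp m * ((1 - m) * Real.exp ⟪u, X1 ω⟫
            + Real.exp ⟪u, X1 ω⟫ * ⟪w - u, X1 ω⟫) ∂P := by
          rw [integral_const_mul, integral_add (hi0.const_mul _) hi1, integral_const_mul, ← hm]
          ring
      _ ≤ ∫ ω, Real.exp ⟪w, X1 ω⟫ ∂P := by
          refine integral_mono (((hi0.const_mul _).add hi1).const_mul _)
            (integrable_of_mem_lapDom hX1 hw) fun ω => ?_
          have hsplit : ⟪w, X1 ω⟫ = m + ⟪u, X1 ω⟫ + (⟪w - u, X1 ω⟫ - m) := by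
            rw [inner_sub_left]; ring
          simp only
          rw [hsplit, Real.exp_add, Real.exp_add]
          -- the tangent-line bound for `exp` at the tilted mean `m`
          have := mul_le_mul_of_nonneg_left (Real.add_one_le_exp (⟪w - u, X1 ω⟫ - m))
            (mul_pos (Real.exp_pos m) (Real.exp_pos ⟪u, X1 ω⟫)).le
          linarith
  rw [cgfK_eq hX1 u, cgfK_eq hX1 w, add_comm]
  calc m + Real.log (∫ ω, Real.exp ⟪u, X1 ω⟫ ∂P)
      = Real.log (Real.exp m * ∫ ω, Real.exp ⟪u, X1 ω⟫ ∂P) := by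
        rw [Real.log_mul (Real.exp_pos _).ne' hpos.ne', Real.log_exp]
    _ ≤ _ := Real.log_le_log (by positivity) hlower

lemma cgfK_zero [IsProbabilityMeasure P] : cgfK P X1 0 = 0 := by
  simp [cgfK, lap]

lemma zero_mem_lapDom [IsProbabilityMeasure P] : (0 : EuclideanSpace ℝ (Fin d)) ∈ lapDom P X1 := by
  simp [lapDom, lap]

/-- At `v = ∇K(u)` the Legendre–Fenchel supremum is attained at `u`. -/
lemma rateI_gradient [IsProbabilityMeasure P] (hX1 : Measurable X1)
    {u : EuclideanSpace ℝ (Fin d)} (hu : u ∈ interior (lapDom P X1)) :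
    rateI P X1 (gradient (cgfK P X1) u) =
      ENNReal.ofReal (⟪u, gradient (cgfK P X1) u⟫ - cgfK P X1 u) := by
  refine le_antisymm (iSup₂_le fun w hw => ENNReal.ofReal_le_ofReal ?_)
    (le_iSup₂_of_le u (interior_subset hu) le_rfl)
  have h := cgfK_tangent hX1 hu hw
  rw [inner_sub_left] at h
  linarith

lemma legendre_nonneg [IsProbabilityMeasure P] (hX1 : Measurable X1)
    {u : EuclideanSpace ℝ (Fin d)} (hu : u ∈ interior (lapDom P X1)) :
    0 ≤ ⟪u, gradient (cgfK P X1) u⟫ - cgfK P X1 u := by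
  have h := cgfK_tangent hX1 hu zero_mem_lapDom
  rw [zero_sub, inner_neg_left, cgfK_zero] at h
  linarith

end Helpers

/-! ### The kernel-weighted rate function -/

/-- Explicit formula for the kernel-weighted rate function: if `f(t)λ ∈ interior D_L` for all
`t ∈ [0,1]` and `x = ∇E_f(λ) = ∫₀¹ f(t) ∇K(f(t)λ) dt`, then
`I_f(x) = ∫₀¹ I(∇K(f(t)λ)) dt`. -/
theorem rateIf_explicit_formula
    {d : ℕ} {Ω : Type*} [MeasurableSpace Ω] (P : Measure Ω) [IsProbabilityMeasure P]
    (X1 : Ω → EuclideanSpace ℝ (Fin d)) (hX1 : Measurable X1)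
    (hCramer : (0 : EuclideanSpace ℝ (Fin d)) ∈ interior (lapDom P X1))
    (f : ℝ → ℝ) (hLip : ∃ C : NNReal, LipschitzOnWith C f (Icc (0:ℝ) 1))
    (hfne : ∃ t ∈ Icc (0:ℝ) 1, f t ≠ 0)
    (l : EuclideanSpace ℝ (Fin d))
    (hl : ∀ t ∈ Icc (0:ℝ) 1, f t • l ∈ interior (lapDom P X1)) :
    rateIf P X1 f (∫ t in Icc (0:ℝ) 1, f t • gradient (cgfK P X1) (f t • l)) =
      ∫⁻ t in Icc (0:ℝ) 1, rateI P X1 (gradient (cgfK P X1) (f t • l)) := by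
  obtain ⟨C, hC⟩ := hLip
  have hf : ContinuousOn f (Icc 0 1) := hC.continuousOn
  have hfl : ContinuousOn (fun t => f t • l) (Icc 0 1) := hf.smul continuousOn_const
  have hK : ContinuousOn (fun t => cgfK P X1 (f t • l)) (Icc 0 1) := fun t ht =>
    ContinuousAt.comp_continuousWithinAt (f := fun t => f t • l)
      (hasFDerivAt_cgfK hX1 (hl t ht)).continuousAt (hfl t ht)
  have hG : ContinuousOn (fun t => gradient (cgfK P X1) (f t • l)) (Icc 0 1) := fun t ht =>
    ContinuousAt.comp_continuousWithinAt (f := fun t => f t • l)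
      (continuousAt_gradient_cgfK hX1 (hl t ht)) (hfl t ht)
  have hKi : IntegrableOn (fun t => cgfK P X1 (f t • l)) (Icc 0 1) :=
    hK.integrableOn_compact isCompact_Icc
  have hGi : IntegrableOn (fun t => f t • gradient (cgfK P X1) (f t • l)) (Icc 0 1) :=
    (hf.smul hG).integrableOn_compact isCompact_Icc
  have hdual : ∀ m : EuclideanSpace ℝ (Fin d),
      ⟪m, ∫ t in Icc (0:ℝ) 1, f t • gradient (cgfK P X1) (f t • l)⟫ =
        ∫ t in Icc (0:ℝ) 1, ⟪f t • m, gradient (cgfK P X1) (f t • l)⟫ := fun m => by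
    rw [← integral_inner hGi m]
    simp [real_inner_smul_right]
  have hdi : ∀ m : EuclideanSpace ℝ (Fin d),
      IntegrableOn (fun t => ⟪f t • m, gradient (cgfK P X1) (f t • l)⟫) (Icc (0:ℝ) 1) := fun m =>
    ((hf.smul continuousOn_const).inner hG).integrableOn_compact isCompact_Icc
  have hlmem : l ∈ EfDom P X1 f :=
    ⟨(ae_restrict_iff' measurableSet_Icc).2
      (Eventually.of_forall fun t ht => interior_subset (hl t ht)), hKi⟩
  -- the supremum defining the left side is attained at `l`
  have hleft : rateIf P X1 f (∫ t in Icc (0:ℝ) 1, f t • gradient (cgfK P X1) (f t • l)) =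
      ENNReal.ofReal (∫ t in Icc (0:ℝ) 1,
        (⟪f t • l, gradient (cgfK P X1) (f t • l)⟫ - cgfK P X1 (f t • l))) := by
    refine le_antisymm (iSup₂_le fun m hm => ENNReal.ofReal_le_ofReal ?_)
      (le_iSup₂_of_le l hlmem ?_)
    · rw [hdual, ← integral_sub (hdi m) hm.2]
      refine integral_mono_ae ((hdi m).sub hm.2) ((hdi l).sub hKi) ?_
      filter_upwards [hm.1, ae_restrict_mem measurableSet_Icc] with t hmt ht
      have h := cgfK_tangent hX1 (hl t ht) hmt
      rw [inner_sub_left] at h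
      linarith
    · rw [hdual, ← integral_sub (hdi l) hKi]
  refine hleft.trans ((ofReal_integral_eq_lintegral_ofReal ((hdi l).sub hKi)
    ((ae_restrict_iff' measurableSet_Icc).2
      (Eventually.of_forall fun t ht => legendre_nonneg hX1 (hl t ht)))).trans ?_)
  exact setLIntegral_congr_fun measurableSet_Icc fun t ht => (rateI_gradient hX1 (hl t ht)).symm
end
end

section
/- One-dimensional rate function beyond the range of the gradient: assume d = 1, the Cramér moment assumption 0 ∈ interior(D_L), and let f : [0,1] → ℝ be a Lipschitz function not identically zero. Put M₊ := min( I_∞(1)/max_{t} f(t)₊ , I_∞(−1)/max_{t} f(t)₋ ) with the convention c/0 := +∞, and assume M₊ < ∞. Assume moreover that s := sup{ ∫₀¹ f(t)·K'(λ f(t)) dt : λ ∈ ℝ with λ f(t) ∈ interior(D_L) for every t ∈ [0,1] } is finite. Then for every real x > s one has I_f(x) = M₊·x − E_f(M₊). -/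
/-!
For `l ≥ 0` with `l < M₊` the path `l f` stays in the interior of `D_L`, while for `l > M₊` it
leaves `closure D_L` on a set of positive measure; so no `l > M₊` belongs to the domain of `E_f`
(`mem_interior_of_lt_Mplus`, `le_Mplus_of_mem_EfDom1`).

Let `l` be in the domain of `E_f` and let `l₁ ≥ l` satisfy `0 ≤ l₁ < M₊`. Convexity of `K` gives
`K (l₁ f) - K (l f) ≤ (l₁ - l) f K'(l₁ f)` pointwise (`cgfK1_tangent`), and integrating,
`E_f l₁ ≤ E_f l + (l₁ - l) s` (`Ef_le`); no differentiation under the integral is needed. Letting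
`l₁ ↑ M₊`, Fatou's lemma yields `M₊ ∈ dom E_f` and `E_f M₊ ≤ E_f l + (M₊ - l) s` (`Ef_closed`).
Since `s < x`, this says that `l x - E_f l ≤ M₊ x - E_f M₊`, so the supremum defining `I_f x` is
attained at `M₊`.
-/

open Set Filter Topology MeasureTheory
open scoped ENNReal

noncomputable section

/-- The effective domain of `E_f(λ) = ∫₀¹ K(λ f(t)) dt`. -/
def EfDom1 {Ω : Type*} [MeasurableSpace Ω] (P : Measure Ω) (X1 : Ω → ℝ) (f : ℝ → ℝ) :
    Set ℝ :=
  {l | (∀ᵐ t ∂(MeasureTheory.volume.restrict (Icc (0:ℝ) 1)), lap1 P X1 (l * f t) ≠ ⊤) ∧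
    IntegrableOn (fun t => cgfK1 P X1 (l * f t)) (Icc (0:ℝ) 1)}

/-- The rate function `I_f = (E_f)^*`. -/
def rateIf1 {Ω : Type*} [MeasurableSpace Ω] (P : Measure Ω) (X1 : Ω → ℝ) (f : ℝ → ℝ)
    (x : ℝ) : ℝ≥0∞ :=
  ⨆ l ∈ EfDom1 P X1 f, ENNReal.ofReal (l * x - ∫ t in Icc (0:ℝ) 1, cgfK1 P X1 (l * f t))

/-- `max_{t ∈ [0,1]} f(t)₊`. -/
def maxfp (f : ℝ → ℝ) : ℝ := ⨆ t : Icc (0:ℝ) 1, max (f t.1) 0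

/-- `max_{t ∈ [0,1]} f(t)₋`. -/
def maxfm (f : ℝ → ℝ) : ℝ := ⨆ t : Icc (0:ℝ) 1, max (-f t.1) 0

/-- `M₊ := min ( I_∞(1)/max f₊ , I_∞(−1)/max f₋ )`, with the convention `c/0 = ∞`. -/
def Mplus {Ω : Type*} [MeasurableSpace Ω] (P : Measure Ω) (X1 : Ω → ℝ) (f : ℝ → ℝ) : ℝ≥0∞ :=
  min (IinfP P X1 / ENNReal.ofReal (maxfp f)) (IinfM P X1 / ENNReal.ofReal (maxfm f))

/-- The set of values `∫₀¹ f(t) K'(λ f(t)) dt` of the gradient of `E_f`, over those `λ` with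
`λ f(t) ∈ interior D_L` for all `t ∈ [0,1]`. -/
def gradSet {Ω : Type*} [MeasurableSpace Ω] (P : Measure Ω) (X1 : Ω → ℝ) (f : ℝ → ℝ) :
    Set ℝ :=
  {r | ∃ l : ℝ, (∀ t ∈ Icc (0:ℝ) 1, l * f t ∈ interior (lapDom1 P X1)) ∧
    r = ∫ t in Icc (0:ℝ) 1, f t * deriv (cgfK1 P X1) (l * f t)}

section Helpers

/-! ### The Laplace transform and the cumulant generating function -/

open ProbabilityTheory

variable {Ω : Type*} [MeasurableSpace Ω] {P : Measure Ω} {X : Ω → ℝ}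

lemma lapDom1_eq (hX : Measurable X) : lapDom1 P X = integrableExpSet X P := by
  ext u
  have hm : AEStronglyMeasurable (fun ω => Real.exp (u * X ω)) P :=
    (Real.measurable_exp.comp (hX.const_mul u)).aestronglyMeasurable
  simp only [lapDom1, lap1, integrableExpSet, mem_ofPred_eq, Integrable, hm, true_and]
  rw [hasFiniteIntegral_iff_ofReal (Eventually.of_forall fun ω => (Real.exp_pos _).le), lt_top_iff_ne_top]

lemma cgfK1_eq (hX : Measurable X) : cgfK1 P X = cgf X P := by
  ext u
  have hm : AEStronglyMeasurable (fun ω => Real.exp (u * X ω)) P :=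
    (Real.measurable_exp.comp (hX.const_mul u)).aestronglyMeasurable
  rw [cgfK1, cgf, mgf, lap1,
    integral_eq_lintegral_of_nonneg_ae (Eventually.of_forall fun ω => (Real.exp_pos _).le) hm]

lemma measurable_lap1 [SFinite P] (hX : Measurable X) : Measurable (lap1 P X) := by
  unfold lap1
  refine Measurable.lintegral_prod_right (f := fun u ω => ENNReal.ofReal (Real.exp (u * X ω))) ?_
  unfold Function.uncurry
  fun_prop

lemma measurable_cgfK1 [SFinite P] (hX : Measurable X) : Measurable (cgfK1 P X) :=
  Real.measurable_log.comp (measurable_lap1 hX).ennreal_toReal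

lemma lap1_pos [IsProbabilityMeasure P] (hX : Measurable X) (u : ℝ) : lap1 P X u ≠ 0 := by
  rw [lap1, ne_eq, lintegral_eq_zero_iff (by fun_prop)]
  intro h
  obtain ⟨ω, hω⟩ := h.exists
  exact absurd hω (by simpa using Real.exp_pos _)

lemma lap1_zero [IsProbabilityMeasure P] : lap1 P X 0 = 1 := by simp [lap1]

lemma cgfK1_zero [IsProbabilityMeasure P] : cgfK1 P X 0 = 0 := by simp [cgfK1, lap1_zero]

/-- The graph of `K` lies above each of its tangents at interior points of `D_L`: this is Jensen's
inequality for the law of `X` tilted by `exp (v X)`, here obtained by integrating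
`exp (w X) ≥ exp (w c) (1 + w (X - c))` with `w = u - v` and `c = K'(v)`. -/
lemma cgfK1_tangent [IsProbabilityMeasure P] (hX : Measurable X) {u v : ℝ}
    (hu : u ∈ lapDom1 P X) (hv : v ∈ interior (lapDom1 P X)) :
    cgfK1 P X v + deriv (cgfK1 P X) v * (u - v) ≤ cgfK1 P X u := by
  rw [lapDom1_eq hX] at hu hv
  rw [cgfK1_eq hX]
  have hvi : Integrable (fun ω => Real.exp (v * X ω)) P :=
    interior_subset (s := integrableExpSet X P) hv
  have hui : Integrable (fun ω => Real.exp (u * X ω)) P := hu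
  have hXi : Integrable (fun ω => X ω * Real.exp (v * X ω)) P := by
    simpa using integrable_pow_mul_exp_of_mem_interior_integrableExpSet hv 1
  have hpos : 0 < mgf X P v := mgf_pos hvi
  have hposu : 0 < mgf X P u := mgf_pos hui
  set c := deriv (cgf X P) v with hc
  have hc' : ∫ ω, X ω * Real.exp (v * X ω) ∂P = c * mgf X P v := by
    rw [hc, deriv_cgf hv, div_mul_cancel₀ _ hpos.ne']
  have key : Real.exp ((u - v) * c) * mgf X P v ≤ mgf X P u := by
    have h1 : ∫ ω, Real.exp ((u - v) * c) * ((1 - (u - v) * c) * Real.exp (v * X ω)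
        + (u - v) * (X ω * Real.exp (v * X ω))) ∂P ≤ ∫ ω, Real.exp (u * X ω) ∂P := by
      refine integral_mono (((hvi.const_mul _).add (hXi.const_mul _)).const_mul _) hui ?_
      intro ω
      have h2 := Real.add_one_le_exp ((u - v) * (X ω - c))
      have h3 : Real.exp (u * X ω)
          = Real.exp ((u - v) * c) * Real.exp (v * X ω) * Real.exp ((u - v) * (X ω - c)) := by
        rw [← Real.exp_add, ← Real.exp_add]; congr 1; ring
      show _ ≤ Real.exp (u * X ω)
      rw [h3]
      have h4 : 0 ≤ Real.exp ((u - v) * c) * Real.exp (v * X ω) := by positivity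
      have := mul_le_mul_of_nonneg_left h2 h4
      simp only
      linarith
    rw [integral_const_mul, integral_add (hvi.const_mul _) (hXi.const_mul _), integral_const_mul,
      integral_const_mul, hc'] at h1
    have h5 : (1 - (u - v) * c) * mgf X P v + (u - v) * (c * mgf X P v) = mgf X P v := by ring
    change Real.exp ((u - v) * c) * ((1 - (u - v) * c) * mgf X P v + (u - v) * (c * mgf X P v))
      ≤ mgf X P u at h1
    rwa [h5] at h1
  have := Real.log_le_log (by positivity) key
  rw [Real.log_mul (Real.exp_pos _).ne' hpos.ne', Real.log_exp] at this
  simp only [cgf]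
  linarith

/-- `K` minus its tangent at `0`, as a function with values in `[0,∞]` which is `∞` off `D_L`. -/
def tiltK (P : Measure Ω) (X : Ω → ℝ) (u : ℝ) : ℝ≥0∞ :=
  open Classical in
  if lap1 P X u = ⊤ then ⊤ else ENNReal.ofReal (cgfK1 P X u - u * deriv (cgfK1 P X) 0)

/-- Radial continuity of the extended function `K`: inside `D_L` by domination, as
`exp (θ u X) ≤ 1 + exp (u X)`, and off `D_L` by Fatou's lemma. -/
lemma tendsto_tiltK [IsProbabilityMeasure P] (hX : Measurable X) {θ : ℕ → ℝ}
    (h0 : ∀ n, 0 ≤ θ n) (h1 : ∀ n, θ n ≤ 1) (hθ : Tendsto θ atTop (𝓝 1)) (u : ℝ)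
    (hfin : ∀ n, lap1 P X (θ n * u) ≠ ⊤) :
    Tendsto (fun n => tiltK P X (θ n * u)) atTop (𝓝 (tiltK P X u)) := by
  have hpt : ∀ ω, Tendsto (fun n => ENNReal.ofReal (Real.exp (θ n * u * X ω))) atTop
      (𝓝 (ENNReal.ofReal (Real.exp (u * X ω)))) := by
    intro ω
    refine ENNReal.tendsto_ofReal ((Real.continuous_exp.tendsto _).comp ?_)
    simpa using (hθ.mul_const u).mul_const (X ω)
  have hmul : Tendsto (fun n => θ n * u) atTop (𝓝 u) := by simpa using hθ.mul_const u
  simp only [tiltK, if_neg (hfin _)]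
  by_cases hu : lap1 P X u = ⊤
  · have hL : Tendsto (fun n => lap1 P X (θ n * u)) atTop (𝓝 ⊤) := by
      have hF := lintegral_liminf_le (μ := P) (u := atTop)
        (f := fun n ω => ENNReal.ofReal (Real.exp (θ n * u * X ω))) (fun n => by fun_prop)
      simp only [fun ω => (hpt ω).liminf_eq] at hF
      change lap1 P X u ≤ liminf (fun n => lap1 P X (θ n * u)) atTop at hF
      rw [hu] at hF
      exact tendsto_of_le_liminf_of_limsup_le hF le_top
    rw [if_pos hu]
    rw [ENNReal.tendsto_ofReal_nhds_top]
    have hR : Tendsto (fun n => (lap1 P X (θ n * u)).toReal) atTop atTop := by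
      rw [← ENNReal.tendsto_ofReal_nhds_top]
      simpa [ENNReal.ofReal_toReal (hfin _)] using hL
    exact (Real.tendsto_log_atTop.comp hR).atTop_add (hmul.mul_const _).neg
  · rw [if_neg hu]
    refine ENNReal.tendsto_ofReal (Tendsto.sub ?_ (hmul.mul_const _))
    have hL : Tendsto (fun n => lap1 P X (θ n * u)) atTop (𝓝 (lap1 P X u)) := by
      refine tendsto_lintegral_of_dominated_convergence
        (fun ω => 1 + ENNReal.ofReal (Real.exp (u * X ω))) (fun n => by fun_prop) ?_ ?_
        (Eventually.of_forall hpt)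
      · intro n
        refine Eventually.of_forall fun ω => ?_
        have : Real.exp (θ n * u * X ω) ≤ 1 + Real.exp (u * X ω) := by
          rcases le_total (u * X ω) 0 with h | h
          · have : Real.exp (θ n * u * X ω) ≤ 1 := by
              rw [Real.exp_le_one_iff, mul_assoc]
              exact mul_nonpos_of_nonneg_of_nonpos (h0 n) h
            linarith [Real.exp_pos (u * X ω)]
          · have : Real.exp (θ n * u * X ω) ≤ Real.exp (u * X ω) := by
              rw [Real.exp_le_exp, mul_assoc]
              exact mul_le_of_le_one_left h (h1 n)
            linarith
        refine (ENNReal.ofReal_le_ofReal this).trans_eq ?_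
        rw [ENNReal.ofReal_add zero_le_one (Real.exp_pos _).le, ENNReal.ofReal_one]
      · rw [lintegral_add_left measurable_const]
        simpa [lap1] using hu
    exact ((ENNReal.tendsto_toReal hu).comp hL).log
      (ENNReal.toReal_ne_zero.2 ⟨lap1_pos hX u, hu⟩)

/-! ### The endpoint `M₊` -/

/-- By continuity of `h`, an almost everywhere bound `l h ≤ S` on `[0,1]` holds at the maximum of
`h₊`. -/
lemma le_div_of_ae_le {h : ℝ → ℝ} (hh : ContinuousOn h (Icc (0:ℝ) 1)) {l : ℝ} (hl : 0 ≤ l)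
    {S : ℝ≥0∞} (hS0 : S ≠ 0)
    (hae : ∀ᵐ t ∂(volume.restrict (Icc (0:ℝ) 1)), ENNReal.ofReal (l * h t) ≤ S) :
    ENNReal.ofReal l ≤ S / ENNReal.ofReal (⨆ t : Icc (0:ℝ) 1, max (h t.1) 0) := by
  rw [ENNReal.le_div_iff_mul_le (Or.inr hS0) (Or.inl ENNReal.ofReal_ne_top)]
  by_cases hS : S = ⊤
  · simp [hS]
  have hcont : ContinuousOn (fun t => l * h t) (Icc (0:ℝ) 1) := continuousOn_const.mul hh
  have heq : EqOn (fun t => max (l * h t) S.toReal) (fun _ => S.toReal) (Icc (0:ℝ) 1) := by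
    refine Measure.eqOn_Icc_of_ae_eq volume zero_ne_one ?_ (hcont.sup continuousOn_const)
      continuousOn_const
    filter_upwards [hae] with t ht
    exact max_eq_right ((ENNReal.ofReal_le_iff_le_toReal hS).1 ht)
  rw [← ENNReal.ofReal_mul hl, ENNReal.ofReal_le_iff_le_toReal hS, Real.mul_iSup_of_nonneg hl]
  have : Nonempty (Icc (0:ℝ) 1) := ⟨⟨0, by simp⟩⟩
  refine ciSup_le fun t => ?_
  have : max (l * h t.1) S.toReal = S.toReal := heq t.2
  rw [mul_max_of_nonneg _ _ hl, mul_zero]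
  exact max_le (max_eq_right_iff.1 this) ENNReal.toReal_nonneg

lemma ofReal_mul_le_sup {h : ℝ → ℝ} (hh : ContinuousOn h (Icc (0:ℝ) 1)) {l t : ℝ} (hl : 0 ≤ l)
    (ht : t ∈ Icc (0:ℝ) 1) :
    ENNReal.ofReal (l * h t)
      ≤ ENNReal.ofReal l * ENNReal.ofReal (⨆ t : Icc (0:ℝ) 1, max (h t.1) 0) := by
  rw [← ENNReal.ofReal_mul hl]
  refine ENNReal.ofReal_le_ofReal (mul_le_mul_of_nonneg_left ?_ hl)
  have hb : BddAbove (range fun t : Icc (0:ℝ) 1 => max (h t.1) 0) := by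
    refine isCompact_range ?_ |>.bddAbove
    exact (continuousOn_iff_continuous_domRestrict.1 hh).max continuous_const
  exact (le_max_left _ _).trans (le_ciSup hb ⟨t, ht⟩)

lemma IinfP_ne_zero (hC : (0:ℝ) ∈ interior (lapDom1 P X)) : IinfP P X ≠ 0 := by
  obtain ⟨ε, hε, hb⟩ := Metric.mem_nhds_iff.1 (mem_interior_iff_mem_nhds.1 hC)
  have hm : ε / 2 ∈ lapDom1 P X := hb (by simp [abs_of_pos hε, hε])
  have : ENNReal.ofReal (ε / 2) ≤ IinfP P X := le_iSup₂_of_le (ε / 2) hm le_rfl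
  exact ((ENNReal.ofReal_pos.2 (half_pos hε)).trans_le this).ne'

lemma IinfM_ne_zero (hC : (0:ℝ) ∈ interior (lapDom1 P X)) : IinfM P X ≠ 0 := by
  obtain ⟨ε, hε, hb⟩ := Metric.mem_nhds_iff.1 (mem_interior_iff_mem_nhds.1 hC)
  have hm : -(ε / 2) ∈ lapDom1 P X := hb (by simp [abs_of_pos hε, hε])
  have : ENNReal.ofReal (ε / 2) ≤ IinfM P X := le_iSup₂_of_le (-(ε / 2)) hm (by simp)
  exact ((ENNReal.ofReal_pos.2 (half_pos hε)).trans_le this).ne'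

lemma Mplus_pos (hC : (0:ℝ) ∈ interior (lapDom1 P X)) (f : ℝ → ℝ) : 0 < Mplus P X f :=
  lt_min (ENNReal.div_pos (IinfP_ne_zero hC) ENNReal.ofReal_ne_top)
    (ENNReal.div_pos (IinfM_ne_zero hC) ENNReal.ofReal_ne_top)

lemma mem_interior_of_lt_Mplus (hX : Measurable X) {f : ℝ → ℝ} (hf : ContinuousOn f (Icc (0:ℝ) 1))
    {l t : ℝ} (hl : 0 ≤ l) (hlM : ENNReal.ofReal l < Mplus P X f) (ht : t ∈ Icc (0:ℝ) 1) :
    l * f t ∈ interior (lapDom1 P X) := by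
  obtain ⟨hp, hm⟩ := lt_min_iff.1 hlM
  have hp' := (ofReal_mul_le_sup hf hl ht).trans_lt (ENNReal.mul_lt_of_lt_div hp)
  have hm' := (ofReal_mul_le_sup hf.neg hl ht).trans_lt (ENNReal.mul_lt_of_lt_div hm)
  simp only [IinfP, IinfM, lt_iSup_iff] at hp' hm'
  obtain ⟨u, hu, hu'⟩ := hp'
  obtain ⟨v, hv, hv'⟩ := hm'
  have h1 := (ENNReal.ofReal_lt_ofReal_iff'.1 hu').1
  have h2 := (ENNReal.ofReal_lt_ofReal_iff'.1 hv').1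
  have h3 : v < l * f t := by simp only [Pi.neg_apply] at h2; linarith
  have hconv : OrdConnected (lapDom1 P X) := by
    rw [lapDom1_eq hX]; exact convex_integrableExpSet.ordConnected
  exact interior_mono (hconv.out hv hu) (by rw [interior_Icc]; exact ⟨h3, h1⟩)

/-- Beyond `M₊` the path `l f` leaves `closure D_L` on a set of positive measure. -/
lemma le_Mplus_of_mem_EfDom1 (hC : (0:ℝ) ∈ interior (lapDom1 P X)) {f : ℝ → ℝ}
    (hf : ContinuousOn f (Icc (0:ℝ) 1)) {l : ℝ} (hl : l ∈ EfDom1 P X f) :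
    ENNReal.ofReal l ≤ Mplus P X f := by
  rcases le_total l 0 with h0 | h0
  · simp [ENNReal.ofReal_of_nonpos h0]
  refine le_min (le_div_of_ae_le hf h0 (IinfP_ne_zero hC) ?_)
    (le_div_of_ae_le hf.neg h0 (IinfM_ne_zero hC) ?_)
  · filter_upwards [hl.1] with t ht
    exact le_iSup₂_of_le (l * f t) ht le_rfl
  · filter_upwards [hl.1] with t ht
    exact le_iSup₂_of_le (l * f t) ht (by simp)

/-! ### The function `E_f` -/

lemma continuousOn_cgfK1 (hX : Measurable X) :
    ContinuousOn (cgfK1 P X) (interior (lapDom1 P X)) := by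
  rw [cgfK1_eq hX, lapDom1_eq hX]; exact analyticOnNhd_cgf.continuousOn

lemma continuousOn_deriv_cgfK1 (hX : Measurable X) :
    ContinuousOn (deriv (cgfK1 P X)) (interior (lapDom1 P X)) := by
  rw [cgfK1_eq hX, lapDom1_eq hX]; exact analyticOnNhd_cgf.deriv.continuousOn

lemma integrableOn_cgfK1_path (hX : Measurable X) {f : ℝ → ℝ}
    (hf : ContinuousOn f (Icc (0:ℝ) 1)) {l : ℝ}
    (hl : ∀ t ∈ Icc (0:ℝ) 1, l * f t ∈ interior (lapDom1 P X)) :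
    IntegrableOn (fun t => cgfK1 P X (l * f t)) (Icc (0:ℝ) 1) :=
  ((continuousOn_cgfK1 hX).comp (continuousOn_const.mul hf) hl).integrableOn_Icc

section Path

variable [IsProbabilityMeasure P] {f : ℝ → ℝ}

/-- The gradient inequality for `E_f`, from `l` in its domain to an interior point `l₁ > l`. -/
lemma Ef_le (hX : Measurable X) (hf : ContinuousOn f (Icc (0:ℝ) 1))
    (hS : BddAbove (gradSet P X f)) {l l₁ : ℝ} (hl : l ∈ EfDom1 P X f) (hlt : l ≤ l₁)
    (hl₁ : ∀ t ∈ Icc (0:ℝ) 1, l₁ * f t ∈ interior (lapDom1 P X)) :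
    ∫ t in Icc (0:ℝ) 1, cgfK1 P X (l₁ * f t) ≤
      (∫ t in Icc (0:ℝ) 1, cgfK1 P X (l * f t)) + (l₁ - l) * sSup (gradSet P X f) := by
  have hg : (∫ t in Icc (0:ℝ) 1, f t * deriv (cgfK1 P X) (l₁ * f t)) ≤ sSup (gradSet P X f) :=
    le_csSup hS ⟨l₁, hl₁, rfl⟩
  have hgi : IntegrableOn (fun t => f t * deriv (cgfK1 P X) (l₁ * f t)) (Icc (0:ℝ) 1) :=
    (hf.mul ((continuousOn_deriv_cgfK1 hX).comp (continuousOn_const.mul hf) hl₁)).integrableOn_Icc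
  have h1 : ∫ t in Icc (0:ℝ) 1, cgfK1 P X (l₁ * f t) ≤
      ∫ t in Icc (0:ℝ) 1, (cgfK1 P X (l * f t)
        + (l₁ - l) * (f t * deriv (cgfK1 P X) (l₁ * f t))) := by
    refine integral_mono_ae (integrableOn_cgfK1_path hX hf hl₁) (hl.2.add (hgi.const_mul _)) ?_
    filter_upwards [hl.1, ae_restrict_mem measurableSet_Icc] with t ht htI
    have := cgfK1_tangent hX (u := l * f t) ht (hl₁ t htI)
    linarith
  rw [integral_add hl.2 (hgi.const_mul _), integral_const_mul] at h1
  have := mul_le_mul_of_nonneg_left hg (sub_nonneg.2 hlt)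
  linarith

/-- Closedness of `E_f` along a sequence `θ n * M → M` of interior points, `θ n ∈ [0,1]`: a bound on
`E_f (θ n * M)` passes to the limit, and in particular forces `M` into the domain of `E_f`. The
proof applies Fatou's lemma to `K` minus its tangent at `0`. -/
lemma Ef_closed (hX : Measurable X) (hC : (0:ℝ) ∈ interior (lapDom1 P X))
    (hf : ContinuousOn f (Icc (0:ℝ) 1)) {θ : ℕ → ℝ} (h0 : ∀ n, 0 ≤ θ n) (h1 : ∀ n, θ n ≤ 1)
    (hθ : Tendsto θ atTop (𝓝 1)) {M : ℝ}
    (hM : ∀ n, ∀ t ∈ Icc (0:ℝ) 1, (θ n * M) * f t ∈ interior (lapDom1 P X))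
    {C : ℕ → ℝ} {c : ℝ} (hCc : Tendsto C atTop (𝓝 c))
    (hle : ∀ᶠ n in atTop, ∫ t in Icc (0:ℝ) 1, cgfK1 P X (θ n * M * f t) ≤ C n) :
    M ∈ EfDom1 P X f ∧ ∫ t in Icc (0:ℝ) 1, cgfK1 P X (M * f t) ≤ c := by
  set m := deriv (cgfK1 P X) 0 with hm
  set ν := (volume : Measure ℝ).restrict (Icc (0:ℝ) 1) with hν
  set F := ∫ t in Icc (0:ℝ) 1, f t with hF
  have hfi : IntegrableOn f (Icc (0:ℝ) 1) := hf.integrableOn_Icc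
  have hfm : AEMeasurable f ν := hf.aemeasurable measurableSet_Icc
  have htan : ∀ u, lap1 P X u ≠ ⊤ → 0 ≤ cgfK1 P X u - u * m := by
    intro u hu
    have := cgfK1_tangent hX (u := u) hu hC
    rw [cgfK1_zero, ← hm] at this
    linarith
  have hKi : ∀ n, Integrable (fun t => cgfK1 P X (θ n * M * f t)) ν :=
    fun n => integrableOn_cgfK1_path hX hf (hM n)
  have hlin : ∀ l : ℝ, Integrable (fun t => l * f t * m) ν :=
    fun l => (hfi.const_mul l).mul_const m
  have hlinval : ∀ l : ℝ, ∫ t, l * f t * m ∂ν = l * F * m := by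
    intro l; rw [integral_mul_const, integral_const_mul]
  have hdom : ∀ n, ∀ᵐ t ∂ν, lap1 P X (θ n * M * f t) ≠ ⊤ := by
    intro n
    filter_upwards [ae_restrict_mem measurableSet_Icc] with t ht
    exact interior_subset (hM n t ht)
  have hnn : ∀ n, 0 ≤ᵐ[ν] fun t => cgfK1 P X (θ n * M * f t) - θ n * M * f t * m := by
    intro n
    filter_upwards [hdom n] with t ht using htan _ ht
  have hval : ∀ n, ∫ t, (cgfK1 P X (θ n * M * f t) - θ n * M * f t * m) ∂ν
      = (∫ t, cgfK1 P X (θ n * M * f t) ∂ν) - θ n * M * F * m := by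
    intro n; rw [integral_sub (hKi n) (hlin _), hlinval]
  have hbd : ∀ᶠ n in atTop, ∫ t, (cgfK1 P X (θ n * M * f t) - θ n * M * f t * m) ∂ν
      ≤ C n - θ n * M * F * m := by
    filter_upwards [hle] with n hn
    rw [hval]; linarith
  have hlim : Tendsto (fun n => C n - θ n * M * F * m) atTop (𝓝 (c - M * F * m)) := by
    have := (((hθ.mul_const M).mul_const F).mul_const m)
    rw [one_mul] at this
    exact hCc.sub this
  have hcnn : 0 ≤ c - M * F * m :=
    ge_of_tendsto hlim (hbd.mono fun n hn => (integral_nonneg_of_ae (hnn n)).trans hn)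
  have hmeas : ∀ l : ℝ, AEMeasurable (fun t => cgfK1 P X (l * f t) - l * f t * m) ν := fun l =>
    ((measurable_cgfK1 hX).comp_aemeasurable (hfm.const_mul l)).sub
      ((hfm.const_mul l).mul_const m)
  have hFatou : ∫⁻ t, tiltK P X (M * f t) ∂ν ≤ ENNReal.ofReal (c - M * F * m) := by
    calc ∫⁻ t, tiltK P X (M * f t) ∂ν
        = ∫⁻ t, liminf (fun n => ENNReal.ofReal
            (cgfK1 P X (θ n * M * f t) - θ n * M * f t * m)) atTop ∂ν := by
          refine lintegral_congr_ae ?_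
          filter_upwards [ae_all_iff.2 hdom] with t ht
          have h := tendsto_tiltK hX h0 h1 hθ (M * f t) (fun n => by rw [← mul_assoc]; exact ht n)
          rw [← h.liminf_eq]
          congr 1
          ext n
          rw [← mul_assoc, tiltK, if_neg (ht n)]
      _ ≤ liminf (fun n => ∫⁻ t, ENNReal.ofReal
            (cgfK1 P X (θ n * M * f t) - θ n * M * f t * m) ∂ν) atTop :=
          lintegral_liminf_le' fun n => (hmeas _).ennreal_ofReal
      _ ≤ liminf (fun n => ENNReal.ofReal (C n - θ n * M * F * m)) atTop := by
          refine liminf_le_liminf ?_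
          filter_upwards [hbd] with n hn
          have hi : Integrable (fun t => cgfK1 P X (θ n * M * f t) - θ n * M * f t * m) ν :=
            (hKi n).sub (hlin _)
          rw [← ofReal_integral_eq_lintegral_ofReal hi (hnn n)]
          exact ENNReal.ofReal_le_ofReal hn
      _ = ENNReal.ofReal (c - M * F * m) := (ENNReal.tendsto_ofReal hlim).liminf_eq
  have htm : AEMeasurable (fun t => tiltK P X (M * f t)) ν := by
    have : Measurable (tiltK P X) := by
      unfold tiltK
      refine Measurable.ite (measurable_lap1 hX (measurableSet_singleton ⊤)) measurable_const ?_
      exact ((measurable_cgfK1 hX).sub (measurable_id.mul_const _)).ennreal_ofReal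
    exact this.comp_aemeasurable (hfm.const_mul M)
  have hMdom : ∀ᵐ t ∂ν, lap1 P X (M * f t) ≠ ⊤ := by
    filter_upwards [ae_lt_top' htm (hFatou.trans_lt ENNReal.ofReal_lt_top).ne] with t ht hcon
    simp [tiltK, hcon] at ht
  have heq : ∫⁻ t, tiltK P X (M * f t) ∂ν
      = ∫⁻ t, ENNReal.ofReal (cgfK1 P X (M * f t) - M * f t * m) ∂ν := by
    refine lintegral_congr_ae ?_
    filter_upwards [hMdom] with t ht
    rw [tiltK, if_neg ht]
  rw [heq] at hFatou
  have hMnn : 0 ≤ᵐ[ν] fun t => cgfK1 P X (M * f t) - M * f t * m := by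
    filter_upwards [hMdom] with t ht using htan _ ht
  have hMi : Integrable (fun t => cgfK1 P X (M * f t) - M * f t * m) ν := by
    refine ⟨(hmeas M).aestronglyMeasurable, ?_⟩
    rw [hasFiniteIntegral_iff_ofReal hMnn]
    exact hFatou.trans_lt ENNReal.ofReal_lt_top
  have hMK : Integrable (fun t => cgfK1 P X (M * f t)) ν := by
    refine (hMi.add (hlin M)).congr (Eventually.of_forall fun t => ?_)
    simp
  refine ⟨⟨hMdom, hMK⟩, ?_⟩
  rw [← ofReal_integral_eq_lintegral_ofReal hMi hMnn, ENNReal.ofReal_le_ofReal_iff hcnn,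
    integral_sub hMK (hlin M), hlinval] at hFatou
  linarith

end Path

end Helpers

/-- One-dimensional kernel-weighted rate function beyond the range of the gradient of `E_f`:
for `x > s := sup ∇E_f(interior D_f)`, one has `I_f(x) = M₊ x − E_f(M₊)`. -/
theorem rateIf1_beyond_gradient_range
    {Ω : Type*} [MeasurableSpace Ω] (P : Measure Ω) [IsProbabilityMeasure P]
    (X1 : Ω → ℝ) (hX1 : Measurable X1)
    (hCramer : (0:ℝ) ∈ interior (lapDom1 P X1))
    (f : ℝ → ℝ) (hLip : ∃ C : NNReal, LipschitzOnWith C f (Icc (0:ℝ) 1))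
    (hfne : ∃ t ∈ Icc (0:ℝ) 1, f t ≠ 0)
    (hM : Mplus P X1 f ≠ ⊤)
    (hSne : (gradSet P X1 f).Nonempty) (hSbdd : BddAbove (gradSet P X1 f)) :
    ∀ x : ℝ, sSup (gradSet P X1 f) < x →
      rateIf1 P X1 f x =
        ENNReal.ofReal ((Mplus P X1 f).toReal * x -
          ∫ t in Icc (0:ℝ) 1, cgfK1 P X1 ((Mplus P X1 f).toReal * f t)) := by
  intro x hx
  obtain ⟨Cst, hCst⟩ := hLip
  have hf : ContinuousOn f (Icc (0:ℝ) 1) := hCst.continuousOn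
  set M := (Mplus P X1 f).toReal with hMdef
  have hMpos : 0 < M := ENNReal.toReal_pos (Mplus_pos hCramer f).ne' hM
  have hint : ∀ l, 0 ≤ l → l < M → ∀ t ∈ Icc (0:ℝ) 1, l * f t ∈ interior (lapDom1 P X1) :=
    fun l h0 hl t ht => mem_interior_of_lt_Mplus hX1 hf h0
      ((ENNReal.ofReal_lt_iff_lt_toReal h0 hM).2 hl) ht
  let θ : ℕ → ℝ := fun n => 1 - 1 / ((n : ℝ) + 1)
  have hθ : Tendsto θ atTop (𝓝 1) := by
    simpa [θ] using (tendsto_const_nhds (x := (1:ℝ))).sub tendsto_one_div_add_atTop_nhds_zero_nat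
  have hθ0 : ∀ n, 0 ≤ θ n := fun n => sub_nonneg.2 <| by
    rw [div_le_one (by positivity)]; linarith [Nat.cast_nonneg (α := ℝ) n]
  have hθ1 : ∀ n, θ n < 1 := fun n => sub_lt_self _ (by positivity)
  have hθM : Tendsto (fun n => θ n * M) atTop (𝓝 M) := by simpa using hθ.mul_const M
  have hθint : ∀ n, ∀ t ∈ Icc (0:ℝ) 1, (θ n * M) * f t ∈ interior (lapDom1 P X1) := fun n =>
    hint _ (mul_nonneg (hθ0 n) hMpos.le) (mul_lt_of_lt_one_left hMpos (hθ1 n))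
  -- The gradient inequality extends from interior points up to the endpoint `M`.
  have key : ∀ l ∈ EfDom1 P X1 f, l < M → M ∈ EfDom1 P X1 f ∧
      ∫ t in Icc (0:ℝ) 1, cgfK1 P X1 (M * f t) ≤
        (∫ t in Icc (0:ℝ) 1, cgfK1 P X1 (l * f t)) + (M - l) * sSup (gradSet P X1 f) := by
    intro l hl hlM
    refine Ef_closed hX1 hCramer hf hθ0 (fun n => (hθ1 n).le) hθ hθint
      (((hθM.sub_const l).mul_const _).const_add _) ?_
    filter_upwards [hθM.eventually (lt_mem_nhds hlM)] with n hn
    exact Ef_le hX1 hf hSbdd hl hn.le (hθint n)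
  have h0dom : (0:ℝ) ∈ EfDom1 P X1 f := by
    refine ⟨Eventually.of_forall fun t => ?_, ?_⟩
    · simp [lap1_zero]
    · simp [cgfK1_zero]
  have hMdom := (key 0 h0dom hMpos).1
  refine le_antisymm (iSup₂_le fun l hl => ENNReal.ofReal_le_ofReal ?_)
    (le_iSup₂_of_le M hMdom le_rfl)
  have hlM : l ≤ M := (ENNReal.ofReal_le_iff_le_toReal hM).1 (le_Mplus_of_mem_EfDom1 hCramer hf hl)
  rcases hlM.eq_or_lt with rfl | hlt
  · exact le_rfl
  · have h1 := (key l hl hlt).2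
    have h2 := mul_le_mul_of_nonneg_left hx.le (sub_nonneg.2 hlM)
    linarith
end
end
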